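/- Define coefficients β(n) by the power series expansion 1/(R(q)·R(q^2)^2) = ∑_{n≥0} β(n)·q^n, where R(q) = (q, q^4; q^5)_∞/(q^2, q^3; q^5)_∞. Then for all n ≥ 0: β(n) > 0 if n ≡ 0, 1, 2, 3, or 4 (mod 10), and β(n) < 0 if n ≡ 5, 6, 7, 8, or 9 (mod 10), with the single exception β(5) = 0. -/

import Mathlib

/-!
Write `j_a = (y^a, y^(10-a), y^10; y^10)_∞`, a theta function of base `y^10`. The quotient
`1 / (R(q) R(q²)²)` equals `j_3 j_4 / (j_1 j_2)` at `y = q` (`target_eq`), and the sign pattern of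
its coefficients is read off from its 5-dissection.

Dissection. Kronecker's formula
`∑_n x^n / (1 - a p^n) = (p; p)_∞³ θ(ax) / (θ(a) θ(x))` (`kronecker`), with base `p = q^10`, `a = q^5`
and `x = q` or `x = q²`, gives `j_4 / (j_1 j_5)` and `j_3 / (j_2 j_5)` as Lambert series. Splitting `n` modulo
5 gives Kronecker series of base `q^50`, that is, quotients of theta functions of `y = q^5`
(`kronecker_dissect`). In the product of the two dissections each residue class modulo 5 collapses,
by two instances of Weierstrass' three-term relation (`rel_X`, `rel_Z`), to a single quotient of
theta functions (`dissection`). Kronecker's formula and the three-term relation rest on Jacobi's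
triple product (`jtp`).

Signs. In each of the five components the `j_a` with odd `a` occur in the numerator only and those
with even `a` in the denominator only, while the factors `(y^10; y^10)_∞` cancel. Putting `y = -u`
turns a component into a product of factors `1 + u^m` and `1 / (1 - u^m)`, whose coefficients are
nonnegative. The components of the classes 1, 2, 3, 4 contain `(1 + u) / (1 - u²) = 1 / (1 - u)`, so
all their coefficients are positive (`strict_pos`). The component of the class 0 contains
`(1 + u³) / (1 - u²) = 1 / (1 - u) - u` and no other factor that contributes to the coefficient of
`u`, so that coefficient is 0 and all others are positive (`strict_pos_zero`). Hence the coefficient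
of `q^(5k + r)` has the sign `(-1)^k`, except that the one of `q^5` vanishes.

The hypothesis is an equation with `∑'`; the quotient has no zeros in the punctured disc, so the
series converges there, and its coefficients are determined (`coeff_eq`).
-/

noncomputable def qp (a q : ℂ) : ℂ := ∏' k : ℕ, (1 - a * q ^ k)

noncomputable def GG (q : ℂ) : ℂ := 1 / (qp q (q ^ 5) * qp (q ^ 4) (q ^ 5))

noncomputable def HH (q : ℂ) : ℂ := 1 / (qp (q ^ 2) (q ^ 5) * qp (q ^ 3) (q ^ 5))

noncomputable def RR (q : ℂ) : ℂ :=
  (qp q (q ^ 5) * qp (q ^ 4) (q ^ 5)) / (qp (q ^ 2) (q ^ 5) * qp (q ^ 3) (q ^ 5))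

noncomputable def phi (q : ℂ) : ℂ := ∑' n : ℤ, q ^ (n.natAbs ^ 2)

noncomputable def psi (q : ℂ) : ℂ := ∑' n : ℕ, q ^ (n * (n + 1) / 2)

namespace KSign

open Filter Topology Finset

/-! ### Infinite products and the theta series -/

theorem qp_summable {p : ℂ} (hp : ‖p‖ < 1) (a : ℂ) : Summable fun k : ℕ => ‖-(a * p ^ k)‖ := by
  simp only [norm_neg, norm_mul, norm_pow]
  exact (summable_geometric_of_lt_one (norm_nonneg _) hp).mul_left _

theorem qp_multipliable {p : ℂ} (hp : ‖p‖ < 1) (a : ℂ) :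
    Multipliable fun k : ℕ => 1 - a * p ^ k := by
  have := multipliable_one_add_of_summable (qp_summable hp a)
  simpa only [← sub_eq_add_neg] using this

theorem qp_tendsto {p : ℂ} (hp : ‖p‖ < 1) (a : ℂ) :
    Tendsto (fun N => ∏ k ∈ range N, (1 - a * p ^ k)) atTop (𝓝 (qp a p)) :=
  (qp_multipliable hp a).tendsto_prod_tprod_nat

theorem qp_split {p : ℂ} (hp : ‖p‖ < 1) (a : ℂ) : qp a p = (1 - a) * qp (a * p) p := by
  have h := tprod_eq_zero_mul' (f := fun k : ℕ => 1 - a * p ^ k)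
    ((qp_multipliable hp (a * p)).congr fun k => by ring)
  rw [qp, h, qp]
  congr 1
  · simp
  · exact tprod_congr fun k => by ring

theorem qp_ne_zero {p : ℂ} (hp : ‖p‖ < 1) {a : ℂ} (h : ∀ k : ℕ, a * p ^ k ≠ 1) : qp a p ≠ 0 := by
  have := tprod_one_add_ne_zero_of_summable (f := fun k : ℕ => -(a * p ^ k))
    (fun k h0 => h k (by linear_combination -h0)) (qp_summable hp a)
  simpa only [← sub_eq_add_neg, qp] using this

/-- `(a; p)_∞ = ∏_{r < m} (a p^r; p^m)_∞`. -/
theorem qp_dissect {p : ℂ} (hp : ‖p‖ < 1) (a : ℂ) (m : ℕ) [NeZero m] :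
    qp a p = ∏ r : Fin m, qp (a * p ^ (r : ℕ)) (p ^ m) := by
  have hm : ‖p ^ m‖ < 1 := by
    rw [norm_pow]; exact pow_lt_one₀ (norm_nonneg _) hp (NeZero.ne m)
  have h := (qp_multipliable hp a).hasProd
  rw [← (Nat.divModEquiv m).symm.hasProd_iff, ← (Equiv.prodComm (Fin m) ℕ).hasProd_iff] at h
  have h2 := h.prod_fiberwise (g := fun r : Fin m => qp (a * p ^ (r : ℕ)) (p ^ m)) (fun r => by
    have := (qp_multipliable hm (a * p ^ (r : ℕ))).hasProd
    refine this.congr_fun fun k => ?_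
    simp only [Function.comp, Nat.divModEquiv, Equiv.coe_fn_symm_mk, Equiv.prodComm_apply, Prod.swap_prod_mk]
    rw [pow_add, pow_mul']
    ring)
  exact h2.unique (hasProd_fintype _)

theorem qp_continuous {p : ℂ} (hp : ‖p‖ < 1) (a₀ : ℂ) :
    Tendsto (fun a => qp a p) (𝓝 a₀) (𝓝 (qp a₀ p)) := by
  have h := tendsto_tprod_one_add_of_dominated_convergence (𝓕 := 𝓝 a₀)
    (f := fun (a : ℂ) (k : ℕ) => -(a * p ^ k)) (g := fun k : ℕ => -(a₀ * p ^ k))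
    (bound := fun k => (‖a₀‖ + 1) * ‖p‖ ^ k)
    ((summable_geometric_of_lt_one (norm_nonneg _) hp).mul_left _)
    (fun k => by
      have : Continuous fun a : ℂ => -(a * p ^ k) := by fun_prop
      exact this.tendsto a₀)
    (by
      filter_upwards [Metric.ball_mem_nhds a₀ one_pos] with a ha k
      rw [norm_neg, norm_mul, norm_pow]
      gcongr
      have := norm_sub_norm_le a a₀
      rw [Metric.mem_ball, dist_eq_norm] at ha
      linarith)
  simpa only [← sub_eq_add_neg, qp] using h

/-- The coefficient `(-1)^n p^(n(n-1)/2)` of the theta series. The integer division is exact, and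
`p ≠ 0` is needed for `E` to be additive in the sense of `E_add`. -/
noncomputable def E (p : ℂ) (n : ℤ) : ℂ := (-1) ^ n * p ^ (n * (n - 1) / 2)

theorem tri_two (n : ℤ) : 2 * (n * (n - 1) / 2) = n * (n - 1) :=
  Int.mul_ediv_cancel' (Int.even_mul_pred_self n).two_dvd

theorem E_zero (p : ℂ) : E p 0 = 1 := by simp [E]

theorem E_ne_zero {p : ℂ} (h0 : p ≠ 0) (n : ℤ) : E p n ≠ 0 :=
  mul_ne_zero (zpow_ne_zero _ (by norm_num)) (zpow_ne_zero _ h0)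

theorem E_add {p : ℂ} (h0 : p ≠ 0) (m n : ℤ) : E p (m + n) = E p m * E p n * p ^ (m * n) := by
  have : (m + n) * (m + n - 1) / 2 = m * (m - 1) / 2 + n * (n - 1) / 2 + m * n := by
    have h1 := tri_two (m + n); have h2 := tri_two m; have h3 := tri_two n
    linarith
  rw [E, E, E, this, zpow_add₀ (by norm_num), zpow_add₀ h0, zpow_add₀ h0]
  ring

theorem E_one_sub {p : ℂ} (n : ℤ) : E p (1 - n) = -E p n := by
  have : (1 - n) * (1 - n - 1) / 2 = n * (n - 1) / 2 := by ring_nf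
  rw [E, E, this, zpow_sub₀ (by norm_num)]
  rcases Int.even_or_odd n with h | h <;> simp [h.neg_one_zpow]

theorem E_succ {p : ℂ} (h0 : p ≠ 0) (n : ℤ) : E p (n + 1) = -(p ^ n) * E p n := by
  rw [E_add h0]; simp [E]; ring

theorem E_neg_succ {p : ℂ} (h0 : p ≠ 0) (m : ℤ) : E p (-(m + 1)) = -(p ^ (m + 1)) * E p (-m) := by
  have := E_succ h0 (-(m + 1))
  rw [show -(m + 1) + 1 = -m by ring] at this
  rw [this, zpow_neg]
  have := zpow_ne_zero (m + 1) h0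
  field_simp

theorem summable_of_ratio {f : ℕ → ℂ} (hf : ∀ n, f n ≠ 0) {g : ℕ → ℂ}
    (hg : ∀ n, f (n + 1) = g n * f n) (h : Tendsto g atTop (𝓝 0)) : Summable fun n => ‖f n‖ := by
  refine summable_of_ratio_test_tendsto_lt_one zero_lt_one
    (.of_forall fun n => norm_ne_zero_iff.mpr (hf n)) ?_
  have := h.norm
  rw [norm_zero] at this
  refine this.congr fun n => ?_
  rw [hg, norm_norm, norm_norm, norm_mul, mul_div_cancel_right₀ _ (norm_ne_zero_iff.mpr (hf n))]

theorem theta_summable {p : ℂ} (h0 : p ≠ 0) (hp : ‖p‖ < 1) {z : ℂ} (hz : z ≠ 0) :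
    Summable fun n : ℤ => ‖E p n * z ^ n‖ := by
  have hpow : Tendsto (fun n : ℕ => p ^ n) atTop (𝓝 0) := tendsto_pow_atTop_nhds_zero_of_norm_lt_one hp
  refine Summable.of_nat_of_neg ?_ ?_
  · refine summable_of_ratio (g := fun n => -(p ^ n) * z)
      (fun n => mul_ne_zero (E_ne_zero h0 _) (zpow_ne_zero _ hz)) (fun n => ?_) ?_
    · push_cast
      rw [E_succ h0, zpow_add_one₀ hz, zpow_natCast]
      ring
    · simpa using hpow.neg.mul_const z
  · refine summable_of_ratio (g := fun n => -(p ^ (n + 1)) * z⁻¹)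
      (fun n => mul_ne_zero (E_ne_zero h0 _) (zpow_ne_zero _ hz)) (fun n => ?_) ?_
    · push_cast
      rw [E_neg_succ h0, neg_add, zpow_add₀ hz, ← Nat.cast_succ, zpow_natCast]
      simp
      ring
    · simpa using ((tendsto_add_atTop_iff_nat 1).mpr hpow).neg.mul_const z⁻¹

/-- The theta function `θ(z; p) = ∑_{n ∈ ℤ} (-1)^n p^(n(n-1)/2) z^n`, for `0 < |p| < 1`. -/
noncomputable def th (p z : ℂ) : ℂ := ∑' n : ℤ, E p n * z ^ n

theorem theta_hasSum {p : ℂ} (h0 : p ≠ 0) (hp : ‖p‖ < 1) {z : ℂ} (hz : z ≠ 0) :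
    HasSum (fun n : ℤ => E p n * z ^ n) (th p z) :=
  (theta_summable h0 hp hz).of_norm.hasSum

/-! ### Jacobi's triple product -/
theorem pow_mul_ne_one {p : ℂ} (hp : ‖p‖ < 1) (k : ℕ) : p * p ^ k ≠ 1 := by
  intro h
  have h1 : ‖p ^ (k + 1)‖ < 1 := by
    rw [norm_pow]; exact pow_lt_one₀ (norm_nonneg _) hp k.succ_ne_zero
  rw [pow_succ', h, norm_one] at h1
  exact lt_irrefl _ h1

/-- The finite product `(p; p)_n`. -/
noncomputable def fac (p : ℂ) (n : ℕ) : ℂ := ∏ k ∈ range n, (1 - p * p ^ k)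

theorem fac_succ (p : ℂ) (n : ℕ) : fac p (n + 1) = fac p n * (1 - p * p ^ n) := prod_range_succ _ _

theorem fac_ne_zero {p : ℂ} (hp : ‖p‖ < 1) (n : ℕ) : fac p n ≠ 0 :=
  prod_ne_zero_iff.mpr fun k _ => sub_ne_zero.mpr (pow_mul_ne_one hp k).symm

/-- The Gaussian binomial coefficient. It is only meaningful for `j ≤ M`, since `M - j`
truncates. -/
noncomputable def gauss (p : ℂ) (M j : ℕ) : ℂ := fac p M / (fac p j * fac p (M - j))

theorem gauss_pascal {p : ℂ} (hp : ‖p‖ < 1) {M i : ℕ} (h : i < M) :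
    gauss p (M + 1) (i + 1) = gauss p M (i + 1) + p ^ (M - i) * gauss p M i := by
  obtain ⟨d, rfl⟩ := Nat.exists_eq_add_of_lt h
  rw [gauss, gauss, gauss, show i + d + 1 + 1 - (i + 1) = d + 1 by omega,
    show i + d + 1 - (i + 1) = d by omega, show i + d + 1 - i = d + 1 by omega,
    fac_succ p (i + d + 1), fac_succ p i, fac_succ p d]
  have h1 := fac_ne_zero hp i
  have h2 := fac_ne_zero hp d
  have h3 := sub_ne_zero.mpr (pow_mul_ne_one hp i).symm
  have h4 := sub_ne_zero.mpr (pow_mul_ne_one hp d).symm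
  field_simp
  ring

theorem gauss_zero {p : ℂ} (hp : ‖p‖ < 1) (M : ℕ) : gauss p M 0 = 1 := by
  rw [gauss, Nat.sub_zero, show fac p 0 = 1 from prod_range_zero _, one_mul,
    div_self (fac_ne_zero hp M)]

theorem gauss_self {p : ℂ} (hp : ‖p‖ < 1) (M : ℕ) : gauss p M M = 1 := by
  rw [gauss, Nat.sub_self, show fac p 0 = 1 from prod_range_zero _, mul_one,
    div_self (fac_ne_zero hp M)]

/-- The `q`-binomial theorem. -/
theorem gauss_binomial {p : ℂ} (h0 : p ≠ 0) (hp : ‖p‖ < 1) (z : ℂ) (M : ℕ) :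
    ∏ k ∈ range M, (1 - z * p ^ k) = ∑ j ∈ range (M + 1), E p j * z ^ j * gauss p M j := by
  induction M with
  | zero => simp [E_zero, gauss_zero hp]
  | succ M ih =>
    have key : ∀ i ∈ range M, E p ((i + 1 : ℕ) : ℤ) * z ^ (i + 1) * gauss p (M + 1) (i + 1) =
        E p ((i + 1 : ℕ) : ℤ) * z ^ (i + 1) * gauss p M (i + 1) -
          z * p ^ M * (E p i * z ^ i * gauss p M i) := by
      intro i hi
      have hi := mem_range.mp hi
      rw [gauss_pascal hp hi]
      push_cast
      rw [E_succ h0, zpow_natCast]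
      have : p ^ M = p ^ i * p ^ (M - i) := by rw [← pow_add]; congr 1; omega
      rw [this]; ring
    have e1 : ∑ j ∈ range (M + 1), E p j * z ^ j * gauss p M j =
        ∑ j ∈ range M, E p ((j + 1 : ℕ) : ℤ) * z ^ (j + 1) * gauss p M (j + 1) + 1 := by
      rw [sum_range_succ']; simp [E_zero, gauss_zero hp]
    have e2 := sum_range_succ (fun j : ℕ => E p j * z ^ j * gauss p M j) M
    have e3 : ∑ j ∈ range (M + 1 + 1), E p j * z ^ j * gauss p (M + 1) j =
        ∑ j ∈ range M, E p ((j + 1 : ℕ) : ℤ) * z ^ (j + 1) * gauss p M (j + 1) -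
          z * p ^ M * ∑ j ∈ range M, E p j * z ^ j * gauss p M j -
          p ^ M * E p M * z ^ (M + 1) + 1 := by
      rw [sum_range_succ' _ (M + 1), sum_range_succ _ M, sum_congr rfl key, sum_sub_distrib,
        ← mul_sum, gauss_self hp, gauss_zero hp]
      push_cast
      rw [E_succ h0, E_zero, zpow_natCast]
      ring
    rw [prod_range_succ, ih, e3]
    rw [gauss_self hp] at e2
    linear_combination e1 - z * p ^ M * e2

theorem prod_neg_part {p : ℂ} (h0 : p ≠ 0) {z : ℂ} (hz : z ≠ 0) (N : ℕ) :
    E p (-N) * ∏ k ∈ range N, (1 - z * p ^ (-(k : ℤ) - 1)) =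
      z ^ N * ∏ k ∈ range N, (1 - p / z * p ^ k) := by
  induction N with
  | zero => simp [E_zero]
  | succ N ih =>
    rw [prod_range_succ, prod_range_succ]
    rw [show -((N + 1 : ℕ) : ℤ) = -((N : ℤ) + 1) by push_cast; ring, E_neg_succ h0,
      show -(N : ℤ) - 1 = -((N : ℤ) + 1) by ring, zpow_neg, ← Nat.cast_add_one, zpow_natCast]
    have : p ^ (N + 1) ≠ 0 := pow_ne_zero _ h0
    calc _ = (E p (-N) * ∏ k ∈ range N, (1 - z * p ^ (-(k : ℤ) - 1))) *
          (-(p ^ (N + 1)) * (1 - z * (p ^ (N + 1))⁻¹)) := by ring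
      _ = _ := by
        rw [ih]
        field_simp
        ring

/-- The finite form of the triple product: the `q`-binomial theorem with `2N` factors, centred by
`z ↦ z p^(-N)`. -/
theorem finite_jtp {p : ℂ} (h0 : p ≠ 0) (hp : ‖p‖ < 1) {z : ℂ} (hz : z ≠ 0) (N : ℕ) :
    (∏ k ∈ range N, (1 - z * p ^ k)) * ∏ k ∈ range N, (1 - p / z * p ^ k) =
      ∑ j ∈ range (2 * N + 1), E p ((j : ℤ) - N) * z ^ ((j : ℤ) - N) * gauss p (2 * N) j := by
  have hpN : p ^ N ≠ 0 := pow_ne_zero _ h0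
  have h := gauss_binomial h0 hp (z * (p ^ N)⁻¹) (2 * N)
  have hl : ∏ k ∈ range (2 * N), (1 - z * (p ^ N)⁻¹ * p ^ k) =
      (∏ k ∈ range N, (1 - z * p ^ (-(k : ℤ) - 1))) * ∏ k ∈ range N, (1 - z * p ^ k) := by
    rw [two_mul, prod_range_add]
    congr 1
    · rw [← prod_range_reflect]
      refine prod_congr rfl fun k hk => ?_
      have hk := mem_range.mp hk
      rw [show -(k : ℤ) - 1 = ((N - 1 - k : ℕ) : ℤ) - (N : ℤ) by omega, zpow_sub₀ h0,
        zpow_natCast, zpow_natCast]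
      ring
    · refine prod_congr rfl fun k _ => ?_
      rw [pow_add]; field_simp
  have hE := prod_neg_part h0 hz N
  have hzN : z ^ N ≠ 0 := pow_ne_zero _ hz
  have e1 : (∏ k ∈ range N, (1 - z * p ^ k)) * ∏ k ∈ range N, (1 - p / z * p ^ k) =
      E p (-N) * (z ^ N)⁻¹ * ∏ k ∈ range (2 * N), (1 - z * (p ^ N)⁻¹ * p ^ k) := by
    rw [hl, ← mul_assoc, mul_right_comm (E p (-N)), hE, mul_right_comm (z ^ N),
      mul_inv_cancel₀ hzN]
    ring
  rw [e1, h, mul_sum]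
  refine sum_congr rfl fun j _ => ?_
  rw [sub_eq_add_neg, E_add h0, zpow_add₀ hz, mul_pow, zpow_mul]
  simp only [zpow_neg, zpow_natCast, inv_pow]
  rw [← pow_mul, ← pow_mul, mul_comm j N]
  ring

/-- Jacobi's triple product, as the limit `N → ∞` of `finite_jtp` by dominated convergence. -/
theorem jtp {p : ℂ} (h0 : p ≠ 0) (hp : ‖p‖ < 1) {z : ℂ} (hz : z ≠ 0) :
    th p z = qp z p * qp (p / z) p * qp p p := by
  have hJ : qp p p ≠ 0 := qp_ne_zero hp (pow_mul_ne_one hp)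
  have hfac : Tendsto (fac p) atTop (𝓝 (qp p p)) := qp_tendsto hp p
  obtain ⟨C₁, hC₁⟩ := (Metric.isBounded_range_of_tendsto _ hfac).exists_norm_le
  obtain ⟨C₂, hC₂⟩ := (Metric.isBounded_range_of_tendsto _ (hfac.inv₀ hJ)).exists_norm_le
  have hC₁' : ∀ n, ‖fac p n‖ ≤ C₁ := fun n => hC₁ _ ⟨n, rfl⟩
  have hC₂' : ∀ n, ‖(fac p n)⁻¹‖ ≤ C₂ := fun n => hC₂ _ ⟨n, rfl⟩
  have hC₁0 : 0 ≤ C₁ := (norm_nonneg _).trans (hC₁' 0)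
  have hC₂0 : 0 ≤ C₂ := (norm_nonneg _).trans (hC₂' 0)
  -- the summands of `finite_jtp`, extended by zero to all of `ℤ`
  let f : ℕ → ℤ → ℂ := fun N n =>
    if n ∈ (range (2 * N + 1)).image (fun j : ℕ => (j : ℤ) - N) then
      E p n * z ^ n * gauss p (2 * N) (n + N).toNat else 0
  have hf : ∀ N, ∑' n, f N n =
      (∏ k ∈ range N, (1 - z * p ^ k)) * ∏ k ∈ range N, (1 - p / z * p ^ k) := by
    intro N
    rw [finite_jtp h0 hp hz, tsum_eq_sum (s := (range (2 * N + 1)).image (fun j : ℕ => (j : ℤ) - N))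
      (fun n hn => if_neg hn), sum_image (fun a _ b _ h => by simpa using h)]
    refine sum_congr rfl fun j hj => ?_
    have : f N ((j : ℤ) - N) = E p ((j : ℤ) - N) * z ^ ((j : ℤ) - N) *
      gauss p (2 * N) ((j : ℤ) - N + N).toNat := if_pos (mem_image_of_mem _ hj)
    refine this.trans ?_
    rw [sub_add_cancel, Int.toNat_natCast]
  have hlim : Tendsto (fun N => ∑' n, f N n) atTop (𝓝 (∑' n : ℤ, E p n * z ^ n * (qp p p)⁻¹)) := by
    refine tendsto_tsum_of_dominated_convergence
      (bound := fun n => ‖E p n * z ^ n‖ * (C₁ * (C₂ * C₂)))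
      ((theta_summable h0 hp hz).mul_right _) (fun n => ?_) (.of_forall fun N n => ?_)
    · have h1 : Tendsto (fun N : ℕ => 2 * N) atTop atTop :=
        tendsto_atTop_mono (fun N => show N ≤ 2 * N by omega) tendsto_id
      have h2 : Tendsto (fun N : ℕ => (n + N).toNat) atTop atTop :=
        tendsto_atTop_mono' _ (.of_forall fun N => show N - n.natAbs ≤ (n + N).toNat by
          omega) (tendsto_sub_atTop_nat n.natAbs)
      have h3 : Tendsto (fun N : ℕ => 2 * N - (n + N).toNat) atTop atTop :=
        tendsto_atTop_mono' _ (.of_forall fun N => by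
          show N - n.natAbs ≤ 2 * N - (n + N).toNat
          omega) (tendsto_sub_atTop_nat n.natAbs)
      have h4 : Tendsto (fun N : ℕ => gauss p (2 * N) (n + N).toNat) atTop (𝓝 (qp p p)⁻¹) := by
        have := (hfac.comp h1).div ((hfac.comp h2).mul (hfac.comp h3)) (mul_ne_zero hJ hJ)
        rw [show qp p p / (qp p p * qp p p) = (qp p p)⁻¹ by field_simp] at this
        exact this
      refine (h4.const_mul (E p n * z ^ n)).congr' ?_
      filter_upwards [eventually_ge_atTop n.natAbs] with N hN
      refine (if_pos ?_).symm
      exact mem_image.mpr ⟨(n + N).toNat, mem_range.mpr (by omega), by omega⟩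
    · by_cases hn : n ∈ (range (2 * N + 1)).image (fun j : ℕ => (j : ℤ) - N)
      · have : f N n = E p n * z ^ n * gauss p (2 * N) (n + N).toNat := if_pos hn
        rw [this, norm_mul]
        refine mul_le_mul_of_nonneg_left ?_ (norm_nonneg _)
        rw [gauss, div_eq_mul_inv, mul_inv, norm_mul, norm_mul]
        exact mul_le_mul (hC₁' _) (mul_le_mul (hC₂' _) (hC₂' _) (norm_nonneg _) hC₂0)
          (by positivity) hC₁0
      · have : f N n = 0 := if_neg hn
        rw [this, norm_zero]; positivity
  have hlim2 : Tendsto (fun N => ∑' n, f N n) atTop (𝓝 (qp z p * qp (p / z) p)) := by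
    simp only [hf]
    exact (qp_tendsto hp z).mul (qp_tendsto hp (p / z))
  have := tendsto_nhds_unique hlim hlim2
  rw [tsum_mul_right] at this
  rw [← this, th]
  field_simp

/-! ### Kronecker's formula -/
theorem th_shift {p : ℂ} (h0 : p ≠ 0) {z : ℂ} (hz : z ≠ 0) (n : ℤ) :
    E p n * z ^ n * th p (z * p ^ n) = th p z := by
  rw [th, th, ← tsum_mul_left, ← (Equiv.addLeft n).tsum_eq (fun m : ℤ => E p m * z ^ m)]
  refine tsum_congr fun m => ?_
  rw [Equiv.coe_addLeft, E_add h0, zpow_add₀ hz, mul_zpow, ← zpow_mul]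
  ring

theorem th_one {p : ℂ} (h0 : p ≠ 0) (hp : ‖p‖ < 1) : th p 1 = 0 := by
  rw [jtp h0 hp one_ne_zero, qp_split hp 1]; ring

theorem th_zpow {p : ℂ} (h0 : p ≠ 0) (hp : ‖p‖ < 1) (n : ℤ) : th p (p ^ n) = 0 := by
  have := th_shift h0 one_ne_zero n
  rw [th_one h0 hp, one_zpow, mul_one, one_mul] at this
  exact (mul_eq_zero.mp this).resolve_left (E_ne_zero h0 n)

/-- `∑_{i ≥ m} E p (-i)`, the part of the theta series at `z = 1` below `-m`. -/
noncomputable def tailSum (p : ℂ) (m : ℕ) : ℂ := ∑' i : ℕ, E p (-((m + i : ℕ) : ℤ))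

/-- The partial sum `∑_{j ≤ k} E p j`, written so that its symmetry `S p k = S p (-k)` (which comes
from `E p (1 - j) = -E p j`) and hence its decay in both directions are visible; see `S_sub`. -/
noncomputable def S (p : ℂ) (k : ℤ) : ℂ := tailSum p k.natAbs

/-- The constant in the bounds for `tailSum` and `S`. -/
noncomputable def CS (p : ℂ) : ℝ := ∑' i : ℕ, ‖E p (-(i : ℤ))‖

theorem E_neg_summable {p : ℂ} (h0 : p ≠ 0) (hp : ‖p‖ < 1) :
    Summable fun i : ℕ => ‖E p (-(i : ℤ))‖ := by
  have := (theta_summable h0 hp one_ne_zero).comp_injective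
    (neg_injective.comp (Nat.cast_injective (R := ℤ)))
  simpa [Function.comp_def] using this

theorem tailSum_summable {p : ℂ} (h0 : p ≠ 0) (hp : ‖p‖ < 1) (m : ℕ) :
    Summable fun i : ℕ => ‖E p (-((m + i : ℕ) : ℤ))‖ := by
  have := (summable_nat_add_iff m).mpr (E_neg_summable h0 hp)
  simpa only [add_comm m] using this

theorem tailSum_succ {p : ℂ} (h0 : p ≠ 0) (hp : ‖p‖ < 1) (m : ℕ) :
    tailSum p m = E p (-(m : ℤ)) + tailSum p (m + 1) := by
  rw [tailSum, (tailSum_summable h0 hp m).of_norm.tsum_eq_zero_add, tailSum]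
  congr 1
  exact tsum_congr fun i => by congr 2; push_cast; ring

theorem tailSum_bound {p : ℂ} (h0 : p ≠ 0) (hp : ‖p‖ < 1) (m : ℕ) :
    ‖tailSum p m‖ ≤ CS p * ‖E p (-(m : ℤ))‖ := by
  refine (norm_tsum_le_tsum_norm (tailSum_summable h0 hp m)).trans ?_
  rw [CS, ← tsum_mul_right]
  refine (tailSum_summable h0 hp m).tsum_le_tsum (fun i => ?_)
    ((E_neg_summable h0 hp).mul_right _)
  rw [Nat.cast_add, neg_add, E_add h0, neg_mul_neg, ← Nat.cast_mul, zpow_natCast, norm_mul,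
    norm_mul, norm_pow, mul_comm ‖E p (-(m : ℤ))‖]
  exact mul_le_of_le_one_right (by positivity) (pow_le_one₀ (norm_nonneg _) hp.le)

theorem CS_nonneg (p : ℂ) : 0 ≤ CS p := tsum_nonneg fun _ => norm_nonneg _

theorem S_sub {p : ℂ} (h0 : p ≠ 0) (hp : ‖p‖ < 1) (k : ℤ) : S p k - S p (k - 1) = E p k := by
  rcases le_or_gt k 0 with hk | hk
  · obtain ⟨m, rfl⟩ : ∃ m : ℕ, k = -(m : ℤ) := ⟨k.natAbs, by omega⟩
    rw [S, S, show (-(m : ℤ)).natAbs = m by omega, show (-(m : ℤ) - 1).natAbs = m + 1 by omega,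
      tailSum_succ h0 hp m]
    ring
  · obtain ⟨m, rfl⟩ : ∃ m : ℕ, k = (m : ℤ) + 1 := ⟨(k - 1).natAbs, by omega⟩
    rw [S, S, show ((m : ℤ) + 1).natAbs = m + 1 by omega,
      show ((m : ℤ) + 1 - 1).natAbs = m by omega, tailSum_succ h0 hp m]
    have := E_one_sub (p := p) (-(m : ℤ))
    rw [show 1 - -(m : ℤ) = (m : ℤ) + 1 by ring] at this
    rw [this]
    ring

theorem S_bound {p : ℂ} (h0 : p ≠ 0) (hp : ‖p‖ < 1) (k : ℤ) :
    ‖S p k‖ ≤ CS p * ‖E p (-|k|)‖ := by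
  have := tailSum_bound h0 hp k.natAbs
  rwa [Int.natCast_natAbs] at this

/-- The quotient `θ(a; p) / (1 - a)`, given by its Laurent series, which also makes sense at
`a = 1`. -/
noncomputable def hh (p a : ℂ) : ℂ := ∑' k : ℤ, S p k * a ^ k

theorem S_summable {p : ℂ} (h0 : p ≠ 0) (hp : ‖p‖ < 1) {a : ℂ} (ha : a ≠ 0) :
    Summable fun k : ℤ => ‖S p k * a ^ k‖ := by
  have h1 := theta_summable h0 hp ha
  have h2 : Summable fun k : ℤ => ‖E p (-k) * a ^ k‖ := by
    have := (Equiv.neg ℤ).summable_iff.mpr (theta_summable h0 hp (inv_ne_zero ha))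
    refine this.congr fun k => ?_
    simp [Function.comp]
  refine Summable.of_nonneg_of_le (fun _ => norm_nonneg _) (fun k => ?_)
    ((h1.add h2).mul_left (CS p))
  rw [norm_mul, norm_mul, norm_mul, ← add_mul, ← mul_assoc]
  refine mul_le_mul_of_nonneg_right ((S_bound h0 hp k).trans ?_) (norm_nonneg _)
  refine mul_le_mul_of_nonneg_left ?_ (CS_nonneg p)
  rcases abs_choice k with h | h <;> rw [h]
  · linarith [norm_nonneg (E p k)]
  · rw [neg_neg]; linarith [norm_nonneg (E p (-k))]

theorem one_sub_mul_hh {p : ℂ} (h0 : p ≠ 0) (hp : ‖p‖ < 1) {a : ℂ} (ha : a ≠ 0) :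
    (1 - a) * hh p a = th p a := by
  have hs := (S_summable h0 hp ha).of_norm
  have h1 : a * hh p a = ∑' k : ℤ, S p (k - 1) * a ^ k := by
    rw [hh, ← tsum_mul_left, ← (Equiv.addRight (1 : ℤ)).tsum_eq (fun k => S p (k - 1) * a ^ k)]
    refine tsum_congr fun k => ?_
    rw [Equiv.coe_addRight]
    simp only [add_sub_cancel_right]
    rw [zpow_add_one₀ ha]; ring
  have hs2 : Summable fun k : ℤ => S p (k - 1) * a ^ k := by
    rw [← (Equiv.addRight (1 : ℤ)).summable_iff]
    refine (hs.mul_left a).congr fun k => ?_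
    simp only [Function.comp]
    rw [Equiv.coe_addRight, add_sub_cancel_right, zpow_add_one₀ ha]; ring
  rw [sub_mul, one_mul, h1, hh, ← hs.tsum_sub hs2, th]
  refine tsum_congr fun k => ?_
  rw [← sub_mul, S_sub h0 hp]

theorem hh_continuous {p : ℂ} (h0 : p ≠ 0) (hp : ‖p‖ < 1) :
    Tendsto (hh p) (𝓝 1) (𝓝 (hh p 1)) := by
  refine tendsto_tsum_of_dominated_convergence
    (bound := fun k => ‖S p k * (2 : ℂ) ^ k‖ + ‖S p k * (2⁻¹ : ℂ) ^ k‖)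
    ((S_summable h0 hp two_ne_zero).add (S_summable h0 hp (by norm_num))) (fun k => ?_) ?_
  · exact ((continuousAt_zpow₀ (1 : ℂ) k (Or.inl one_ne_zero)).tendsto).const_mul _
  · filter_upwards [Metric.ball_mem_nhds (1 : ℂ) (by norm_num : (0 : ℝ) < 1 / 2)] with a ha k
    rw [Metric.mem_ball, dist_eq_norm] at ha
    have h1 := norm_sub_norm_le a 1
    have h2 := norm_sub_norm_le 1 a
    rw [norm_sub_rev] at h2
    rw [norm_one] at h1 h2
    have ha2 : ‖a‖ ≤ 2 := by linarith
    have ha3 : 2⁻¹ ≤ ‖a‖ := by norm_num; linarith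
    rw [norm_mul, norm_mul, norm_mul, ← mul_add, norm_zpow, norm_zpow, norm_zpow, norm_inv,
      Complex.norm_ofNat]
    refine mul_le_mul_of_nonneg_left ?_ (norm_nonneg _)
    rcases le_total 0 k with hk | hk
    · have := zpow_le_zpow_left₀ hk (norm_nonneg a) ha2
      have : (0 : ℝ) < 2⁻¹ ^ k := by positivity
      linarith
    · have h3 : ‖a‖ ^ k ≤ 2⁻¹ ^ k := by
        obtain ⟨m, rfl⟩ : ∃ m : ℕ, k = -(m : ℤ) := ⟨k.natAbs, by omega⟩
        rw [zpow_neg, zpow_neg, zpow_natCast, zpow_natCast]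
        exact inv_anti₀ (by positivity) (pow_le_pow_left₀ (by norm_num) ha3 m)
      have : (0 : ℝ) < 2 ^ k := by positivity
      linarith

/-- Jacobi's formula for the cube of the Euler product: the limit `a → 1` of the triple product
divided by `1 - a`. -/
theorem hh_one {p : ℂ} (h0 : p ≠ 0) (hp : ‖p‖ < 1) : hh p 1 = qp p p ^ 3 := by
  have h1 : Tendsto (fun a => qp (a * p) p * qp (p / a) p * qp p p) (𝓝[≠] 1)
      (𝓝 (qp p p ^ 3)) := by
    have e1 : Tendsto (fun a : ℂ => a * p) (𝓝[≠] 1) (𝓝 p) := by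
      have : ContinuousAt (fun a : ℂ => a * p) 1 := by fun_prop
      simpa using this.tendsto.mono_left nhdsWithin_le_nhds
    have e2 : Tendsto (fun a : ℂ => p / a) (𝓝[≠] 1) (𝓝 p) := by
      have : ContinuousAt (fun a : ℂ => p / a) 1 := by fun_prop (disch := norm_num)
      simpa using this.tendsto.mono_left nhdsWithin_le_nhds
    have := (((qp_continuous hp p).comp e1).mul ((qp_continuous hp p).comp e2)).mul_const (qp p p)
    rw [show qp p p ^ 3 = qp p p * qp p p * qp p p by ring]
    exact this
  have h2 : Tendsto (hh p) (𝓝[≠] 1) (𝓝 (hh p 1)) :=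
    (hh_continuous h0 hp).mono_left nhdsWithin_le_nhds
  refine tendsto_nhds_unique (h2.congr' ?_) h1
  have h3 : ∀ᶠ a : ℂ in 𝓝[≠] 1, a ≠ 0 :=
    nhdsWithin_le_nhds (isOpen_ne.mem_nhds one_ne_zero)
  filter_upwards [h3, self_mem_nhdsWithin] with a ha ha1
  have ha1 : 1 - a ≠ 0 := sub_ne_zero.mpr (Ne.symm ha1)
  have := one_sub_mul_hh h0 hp ha
  rw [jtp h0 hp ha, qp_split hp a] at this
  exact mul_left_cancel₀ ha1 (by rw [this]; ring)

/-- A function of `x` alone that factors out of the double series in `kronecker_aux`; it turns out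
to be `(p; p)_∞³ / θ(x; p)`. -/
noncomputable def cc (p x : ℂ) : ℂ := ∑' k : ℤ, x⁻¹ ^ k * (S p k / E p k)

theorem cc_summable {p : ℂ} (h0 : p ≠ 0) (hp : ‖p‖ < 1) {x : ℂ} (hx1 : ‖p‖ < ‖x‖)
    (hx2 : ‖x‖ < 1) : Summable fun k : ℤ => ‖x⁻¹ ^ k * (S p k / E p k)‖ := by
  have hx0 : x ≠ 0 := norm_pos_iff.mp ((norm_nonneg _).trans_lt hx1)
  have hEn : ∀ k, 0 < ‖E p k‖ := fun k => norm_pos_iff.mpr (E_ne_zero h0 k)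
  refine Summable.of_nat_of_neg ?_ ?_
  · have hr : ‖p‖ / ‖x‖ < 1 := (div_lt_one ((norm_nonneg _).trans_lt hx1)).mpr hx1
    refine Summable.of_nonneg_of_le (fun _ => norm_nonneg _) (fun k => ?_)
      ((summable_geometric_of_lt_one (by positivity) hr).mul_left (CS p))
    have hb := S_bound h0 hp k
    have hE : E p (-(k : ℤ)) = p ^ k * E p k := by
      have h4 := E_one_sub (p := p) (-(k : ℤ))
      rw [show 1 - -(k : ℤ) = (k : ℤ) + 1 by ring, E_succ h0, zpow_natCast] at h4
      linear_combination h4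
    rw [abs_of_nonneg (by positivity), hE, norm_mul, norm_pow] at hb
    rw [norm_mul, norm_div, norm_zpow, zpow_natCast, norm_inv, div_pow, inv_pow]
    calc _ ≤ (‖x‖ ^ k)⁻¹ * (CS p * (‖p‖ ^ k * ‖E p k‖) / ‖E p k‖) := by gcongr
      _ = _ := by field_simp [(hEn k).ne']
  · refine Summable.of_nonneg_of_le (fun _ => norm_nonneg _) (fun k => ?_)
      ((summable_geometric_of_lt_one (norm_nonneg _) hx2).mul_left (CS p))
    have hb := S_bound h0 hp (-(k : ℤ))
    rw [abs_neg, abs_of_nonneg (by positivity)] at hb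
    rw [norm_mul, norm_div, norm_zpow, zpow_neg, zpow_natCast, norm_inv, inv_pow, inv_inv,
      mul_comm]
    gcongr
    exact (div_le_iff₀ (hEn _)).mpr hb

theorem hasSum_mul_norm {f g : ℤ → ℂ} (hf : Summable fun n => ‖f n‖)
    (hg : Summable fun n => ‖g n‖) {a b : ℂ} (ha : HasSum f a) (hb : HasSum g b) :
    HasSum (fun u : ℤ × ℤ => f u.1 * g u.2) (a * b) :=
  ha.mul hb (summable_mul_of_summable_norm (f := f) (g := g) hf hg)

/-- The substitution `(n, k) ↦ (n + k, k)` of summation indices. -/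
def shear : ℤ × ℤ ≃ ℤ × ℤ :=
  ⟨fun u => (u.1 + u.2, u.2), fun u => (u.1 - u.2, u.2), fun u => by simp, fun u => by simp⟩

/-- Expanding `hh` and substituting `n + k` for `n` separates the double series, because
`E p (n + k) = E p n * E p k * p^(nk)`. -/
theorem kronecker_aux {p : ℂ} (h0 : p ≠ 0) (hp : ‖p‖ < 1) {x : ℂ} (hx1 : ‖p‖ < ‖x‖)
    (hx2 : ‖x‖ < 1) {a : ℂ} (ha : a ≠ 0) :
    HasSum (fun n : ℤ => x ^ n * (E p n * a ^ n * hh p (a * p ^ n))) (th p (a * x) * cc p x) := by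
  have hx0 : x ≠ 0 := norm_pos_iff.mp ((norm_nonneg _).trans_lt hx1)
  have hax : a * x ≠ 0 := mul_ne_zero ha hx0
  have hc := cc_summable h0 hp hx1 hx2
  have ht := theta_summable h0 hp hax
  have hprod : HasSum (fun u : ℤ × ℤ => E p u.1 * (a * x) ^ u.1 *
      (x⁻¹ ^ u.2 * (S p u.2 / E p u.2))) (th p (a * x) * cc p x) :=
    hasSum_mul_norm ht hc (theta_hasSum h0 hp hax) hc.of_norm.hasSum
  have h2 : HasSum (fun u : ℤ × ℤ =>
      x ^ u.1 * (E p u.1 * a ^ u.1 * (S p u.2 * (a * p ^ u.1) ^ u.2)))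
      (th p (a * x) * cc p x) := by
    rw [← shear.hasSum_iff] at hprod
    refine hprod.congr_fun fun u => ?_
    obtain ⟨n, k⟩ := u
    show x ^ n * (E p n * a ^ n * (S p k * (a * p ^ n) ^ k)) =
      E p (n + k) * (a * x) ^ (n + k) * (x⁻¹ ^ k * (S p k / E p k))
    rw [E_add h0, zpow_add₀ hax, mul_zpow, mul_zpow, mul_zpow, ← zpow_mul, inv_zpow]
    have h1 := E_ne_zero h0 k
    have h2 := zpow_ne_zero k hx0
    generalize E p n = u1, E p k = u2 at *
    field_simp
  refine h2.prod_fiberwise fun n => ?_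
  have hpn : a * p ^ n ≠ 0 := mul_ne_zero ha (zpow_ne_zero _ h0)
  exact ((S_summable h0 hp hpn).of_norm.hasSum.mul_left (E p n * a ^ n)).mul_left (x ^ n)

theorem th_ne_zero {p : ℂ} (h0 : p ≠ 0) (hp : ‖p‖ < 1) {a : ℂ} (ha : a ≠ 0)
    (h : ∀ n : ℤ, a * p ^ n ≠ 1) : th p a ≠ 0 := by
  rw [jtp h0 hp ha]
  refine mul_ne_zero (mul_ne_zero (qp_ne_zero hp fun k => ?_) (qp_ne_zero hp fun k hk => ?_))
    (qp_ne_zero hp (pow_mul_ne_one hp))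
  · exact_mod_cast h k
  · refine h (-((k + 1 : ℕ) : ℤ)) ?_
    rw [zpow_neg, zpow_natCast]
    have : p ^ (k + 1) ≠ 0 := pow_ne_zero _ h0
    rw [div_mul_eq_mul_div, div_eq_one_iff_eq ha, ← pow_succ'] at hk
    rw [hk] at this ⊢
    exact mul_inv_cancel₀ this

theorem mul_zpow_ne_one {p x : ℂ} (hp : ‖p‖ < 1) (hx1 : ‖p‖ < ‖x‖) (hx2 : ‖x‖ < 1) (n : ℤ) :
    x * p ^ n ≠ 1 := by
  intro h
  have h := congrArg norm h
  rw [norm_mul, norm_zpow, norm_one] at h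
  rcases le_or_gt 0 n with hn | hn
  · lift n to ℕ using hn
    rw [zpow_natCast] at h
    have := pow_le_one₀ (n := n) (norm_nonneg p) hp.le
    nlinarith [norm_nonneg x]
  · obtain ⟨m, rfl⟩ : ∃ m : ℕ, n = -((m + 1 : ℕ) : ℤ) := ⟨(-n - 1).toNat, by omega⟩
    rw [zpow_neg, zpow_natCast] at h
    have h1 : ‖p‖ ^ (m + 1) ≤ ‖p‖ := by
      rw [pow_succ]
      exact mul_le_of_le_one_left (norm_nonneg p) (pow_le_one₀ (norm_nonneg p) hp.le)
    have h2 : ‖p‖ ^ (m + 1) ≠ 0 := by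
      intro h2
      rw [h2] at h; simp at h
    have h3 : ‖x‖ = ‖p‖ ^ (m + 1) := by field_simp at h; exact h
    linarith

/-- Kronecker's partial fraction formula for a quotient of theta functions. By quasi-periodicity,
`θ(a) / (1 - a p^n)` is the `n`-th term of `kronecker_aux` without its factor `x^n`. -/
theorem kronecker {p : ℂ} (h0 : p ≠ 0) (hp : ‖p‖ < 1) {x : ℂ} (hx1 : ‖p‖ < ‖x‖)
    (hx2 : ‖x‖ < 1) {a : ℂ} (ha : a ≠ 0) (h : ∀ n : ℤ, a * p ^ n ≠ 1) :
    HasSum (fun n : ℤ => x ^ n / (1 - a * p ^ n))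
      (qp p p ^ 3 * th p (a * x) / (th p a * th p x)) := by
  have hx0 : x ≠ 0 := norm_pos_iff.mp ((norm_nonneg _).trans_lt hx1)
  have hx := th_ne_zero h0 hp hx0 (mul_zpow_ne_one hp hx1 hx2)
  have hta := th_ne_zero h0 hp ha h
  -- the value of `cc p x` is found by putting `a = 1`, where only the term `n = 0` survives
  have hc : qp p p ^ 3 = th p x * cc p x := by
    have h1 := kronecker_aux h0 hp hx1 hx2 one_ne_zero
    have h2 := hasSum_single (f := fun n : ℤ => x ^ n * (E p n * 1 ^ n * hh p (1 * p ^ n))) 0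
      (fun n hn => by
        have h3 := one_sub_mul_hh h0 hp (zpow_ne_zero n h0)
        rw [th_zpow h0 hp] at h3
        have h4 : p ^ n ≠ 1 := by
          intro h4
          have h5 := congrArg norm h4
          rw [norm_zpow, norm_one, zpow_eq_one_iff_right₀ (norm_nonneg _) hp.ne] at h5
          exact hn h5
        rw [one_mul, (mul_eq_zero.mp h3).resolve_left (sub_ne_zero.mpr (Ne.symm h4))]
        ring)
    have h6 := h1.unique h2
    simp only [zpow_zero, one_mul, mul_one, E_zero] at h6
    rw [h6, hh_one h0 hp]
  have h1 := (kronecker_aux h0 hp hx1 hx2 ha).div_const (th p a)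
  have e : qp p p ^ 3 * th p (a * x) / (th p a * th p x) = th p (a * x) * cc p x / th p a := by
    rw [hc]; field_simp
  rw [e]
  refine h1.congr_fun fun n => ?_
  have h2 := one_sub_mul_hh h0 hp (mul_ne_zero ha (zpow_ne_zero n h0))
  have h3 := th_shift h0 ha n
  have h4 : 1 - a * p ^ n ≠ 0 := sub_ne_zero.mpr (h n).symm
  rw [div_eq_div_iff h4 hta, ← h3, ← h2]
  ring

/-! ### Weierstrass' three-term relation -/
theorem E_mul_neg {p : ℂ} (h0 : p ≠ 0) (l : ℤ) : E p l * E p (-l) = p ^ (l * l) := by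
  have := E_add h0 l (-l)
  rw [add_neg_cancel, E_zero, mul_neg, zpow_neg] at this
  have h1 := zpow_ne_zero (l * l) h0
  field_simp at this
  exact this.symm

theorem E_sq {p : ℂ} (h0 : p ≠ 0) (k : ℤ) : E p k * E p k = p ^ (k * k) * (p ^ k)⁻¹ := by
  rw [E, ← zpow_neg, ← zpow_add₀ h0]
  have h1 : (-1 : ℂ) ^ k * (-1) ^ k = 1 := by rw [← mul_zpow]; norm_num
  calc _ = ((-1 : ℂ) ^ k * (-1) ^ k) * (p ^ (k * (k - 1) / 2) * p ^ (k * (k - 1) / 2)) := by ring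
    _ = _ := by
      rw [h1, one_mul, ← zpow_add₀ h0, ← two_mul, tri_two]
      congr 1; ring

theorem E_base_sq {p : ℂ} (h0 : p ≠ 0) (k : ℤ) :
    E (p ^ 2) k = (-1) ^ k * (p ^ (k * k) * (p ^ k)⁻¹) := by
  rw [E, ← zpow_neg, ← zpow_add₀ h0, ← zpow_natCast, ← zpow_mul]
  congr 2
  rw [Nat.cast_ofNat, tri_two]; ring

theorem neg_mul_zpow (z : ℂ) (k : ℤ) : (-1 : ℂ) ^ k * (-z) ^ k = z ^ k := by
  rw [← mul_zpow, neg_one_mul, neg_neg]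

/-- Product formula: the double series for `θ(xw) θ(x/w)`, split by the parity of the sum of the
two summation indices. -/
theorem th_mul_th {p : ℂ} (h0 : p ≠ 0) (hp : ‖p‖ < 1) {x w : ℂ} (hx : x ≠ 0) (hw : w ≠ 0) :
    th p (x * w) * th p (x / w) = th (p ^ 2) (-x ^ 2) * th (p ^ 2) (-(p * w ^ 2)) -
      x / w * (th (p ^ 2) (-(p * x ^ 2)) * th (p ^ 2) (-w ^ 2)) := by
  have hxw : x * w ≠ 0 := mul_ne_zero hx hw
  have hxw' : x / w ≠ 0 := div_ne_zero hx hw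
  have h02 : p ^ 2 ≠ 0 := pow_ne_zero _ h0
  have hp2 : ‖p ^ 2‖ < 1 := by rw [norm_pow]; exact pow_lt_one₀ (norm_nonneg _) hp two_ne_zero
  have hA : ∀ {z : ℂ}, z ≠ 0 → -z ^ 2 ≠ 0 := fun hz => neg_ne_zero.mpr (pow_ne_zero _ hz)
  have hB : ∀ {z : ℂ}, z ≠ 0 → -(p * z ^ 2) ≠ 0 := fun hz =>
    neg_ne_zero.mpr (mul_ne_zero h0 (pow_ne_zero _ hz))
  have key : ∀ {z₁ z₂ : ℂ}, z₁ ≠ 0 → z₂ ≠ 0 → HasSum (fun u : ℤ × ℤ =>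
      E (p ^ 2) u.1 * z₁ ^ u.1 * (E (p ^ 2) u.2 * z₂ ^ u.2)) (th (p ^ 2) z₁ * th (p ^ 2) z₂) :=
    fun h1 h2 => hasSum_mul_norm (theta_summable h02 hp2 h1) (theta_summable h02 hp2 h2)
      (theta_hasSum h02 hp2 h1) (theta_hasSum h02 hp2 h2)
  have hlhs : HasSum (fun u : ℤ × ℤ => E p u.1 * (x * w) ^ u.1 * (E p u.2 * (x / w) ^ u.2))
      (th p (x * w) * th p (x / w)) :=
    hasSum_mul_norm (theta_summable h0 hp hxw) (theta_summable h0 hp hxw')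
      (theta_hasSum h0 hp hxw) (theta_hasSum h0 hp hxw')
  let f : ℤ × ℤ → ℂ := fun u => E p u.1 * (x * w) ^ u.1 * (E p u.2 * (x / w) ^ u.2)
  let i : ℤ × ℤ → ℤ × ℤ := fun u => (u.1 + u.2, u.1 - u.2)
  let j : ℤ × ℤ → ℤ × ℤ := fun u => (u.1 + u.2, u.1 - u.2 + 1)
  have hi : Function.Injective i := fun u v h => by
    have h1 := congrArg Prod.fst h; have h2 := congrArg Prod.snd h
    simp only [i] at h1 h2
    ext <;> omega
  have hj : Function.Injective j := fun u v h => by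
    have h1 := congrArg Prod.fst h; have h2 := congrArg Prod.snd h
    simp only [j] at h1 h2
    ext <;> omega
  have hij : IsCompl (Set.range i) (Set.range j) := by
    refine IsCompl.of_eq ?_ ?_
    · refine Set.eq_empty_of_forall_notMem fun v hv => ?_
      obtain ⟨⟨u, hu⟩, ⟨u', hu'⟩⟩ := hv
      rw [← hu'] at hu
      have h1 := congrArg Prod.fst hu; have h2 := congrArg Prod.snd hu
      simp only [i, j] at h1 h2
      omega
    · refine Set.eq_univ_of_forall fun v => ?_
      rcases Int.even_or_odd (v.1 + v.2) with h | h
      · refine Or.inl ⟨((v.1 + v.2) / 2, (v.1 - v.2) / 2), ?_⟩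
        obtain ⟨m, hm⟩ := h
        simp only [i]
        ext <;> simp only <;> omega
      · refine Or.inr ⟨((v.1 + v.2 - 1) / 2, (v.1 - v.2 + 1) / 2), ?_⟩
        obtain ⟨m, hm⟩ := h
        simp only [j]
        ext <;> simp only <;> omega
  have hEE : ∀ k l : ℤ, E p (k + l) * E p (k - l) = p ^ (k * k) * (p ^ k)⁻¹ * p ^ (l * l) := by
    intro k l
    rw [sub_eq_add_neg, E_add h0, E_add h0 k (-l), ← E_sq h0, ← E_mul_neg h0 l, mul_neg, zpow_neg]
    have := zpow_ne_zero (k * l) h0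
    field_simp
  have h1 : HasSum (f ∘ i) (th (p ^ 2) (-x ^ 2) * th (p ^ 2) (-(p * w ^ 2))) := by
    refine (key (hA hx) (hB hw)).congr_fun fun u => ?_
    obtain ⟨k, l⟩ := u
    show E p (k + l) * (x * w) ^ (k + l) * (E p (k - l) * (x / w) ^ (k - l)) =
      E (p ^ 2) k * (-x ^ 2) ^ k * (E (p ^ 2) l * (-(p * w ^ 2)) ^ l)
    rw [E_base_sq h0, E_base_sq h0]
    calc _ = (E p (k + l) * E p (k - l)) * ((x * w) ^ (k + l) * (x / w) ^ (k - l)) := by ring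
      _ = (p ^ (k * k) * (p ^ k)⁻¹ * p ^ (l * l)) * ((x ^ 2) ^ k * (w ^ 2) ^ l) := by
        rw [hEE, zpow_add₀ hxw, zpow_sub₀ hxw', mul_zpow, mul_zpow, div_zpow, div_zpow,
          sq, sq, mul_zpow, mul_zpow]
        have h3 := zpow_ne_zero l hx
        have h4 := zpow_ne_zero k hw
        have h5 := zpow_ne_zero l hw
        field_simp
      _ = (p ^ (k * k) * (p ^ k)⁻¹ * p ^ (l * l)) * (((-1) ^ k * (-x ^ 2) ^ k) *
            ((p ^ l)⁻¹ * ((-1) ^ l * (-(p * w ^ 2)) ^ l))) := by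
        rw [neg_mul_zpow, neg_mul_zpow, mul_zpow p]
        have h3 := zpow_ne_zero l h0
        field_simp
      _ = _ := by ring
  have h2 : HasSum (f ∘ j) (-(x / w) * (th (p ^ 2) (-(p * x ^ 2)) * th (p ^ 2) (-w ^ 2))) := by
    refine ((key (hB hx) (hA hw)).mul_left (-(x / w))).congr_fun fun u => ?_
    obtain ⟨k, l⟩ := u
    show E p (k + l) * (x * w) ^ (k + l) * (E p (k - l + 1) * (x / w) ^ (k - l + 1)) =
      -(x / w) * (E (p ^ 2) k * (-(p * x ^ 2)) ^ k * (E (p ^ 2) l * (-w ^ 2) ^ l))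
    rw [E_base_sq h0, E_base_sq h0, E_succ h0, zpow_add_one₀ hxw']
    calc _ = -(x / w) * ((E p (k + l) * E p (k - l)) * p ^ (k - l) *
          ((x * w) ^ (k + l) * (x / w) ^ (k - l))) := by ring
      _ = -(x / w) * ((p ^ (k * k) * (p ^ l)⁻¹ * p ^ (l * l)) * ((x ^ 2) ^ k * (w ^ 2) ^ l)) := by
        rw [hEE, zpow_add₀ hxw, zpow_sub₀ hxw', mul_zpow, mul_zpow, div_zpow, div_zpow,
          sq, sq, mul_zpow, mul_zpow, zpow_sub₀ h0]
        have h3 := zpow_ne_zero l hx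
        have h4 := zpow_ne_zero k hw
        have h5 := zpow_ne_zero l hw
        have h6 := zpow_ne_zero k h0
        field_simp
      _ = -(x / w) * ((p ^ (k * k) * (p ^ l)⁻¹ * p ^ (l * l)) *
            (((p ^ k)⁻¹ * ((-1) ^ k * (-(p * x ^ 2)) ^ k)) * ((-1) ^ l * (-w ^ 2) ^ l))) := by
        rw [neg_mul_zpow, neg_mul_zpow, mul_zpow p]
        have h3 := zpow_ne_zero k h0
        field_simp
      _ = _ := by ring
  have h3 := HasSum.add_isCompl hij (hi.hasSum_range_iff.mpr h1) (hj.hasSum_range_iff.mpr h2)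
  rw [hlhs.unique h3]
  ring

/-- Weierstrass' three-term relation, as a Plücker relation between the values of the two theta
functions in `th_mul_th`. -/
theorem three_term {p : ℂ} (h0 : p ≠ 0) (hp : ‖p‖ < 1) {a b c d : ℂ} (ha : a ≠ 0) (hb : b ≠ 0)
    (hc : c ≠ 0) (hd : d ≠ 0) :
    th p (a * b) * th p (a / b) / a * (th p (c * d) * th p (c / d) / c) -
      th p (a * c) * th p (a / c) / a * (th p (b * d) * th p (b / d) / b) +
      th p (a * d) * th p (a / d) / a * (th p (b * c) * th p (b / c) / b) = 0 := by
  rw [th_mul_th h0 hp ha hb, th_mul_th h0 hp hc hd, th_mul_th h0 hp ha hc, th_mul_th h0 hp hb hd,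
    th_mul_th h0 hp ha hd, th_mul_th h0 hp hb hc]
  field_simp
  ring

theorem th_symm {p : ℂ} (h0 : p ≠ 0) (hp : ‖p‖ < 1) {z : ℂ} (hz : z ≠ 0) :
    th p (p / z) = th p z := by
  rw [jtp h0 hp (div_ne_zero h0 hz), jtp h0 hp hz, div_div_cancel₀ h0]
  ring

theorem th_inv {p : ℂ} (h0 : p ≠ 0) (hp : ‖p‖ < 1) {z : ℂ} (hz : z ≠ 0) :
    th p z⁻¹ = -z⁻¹ * th p z := by
  have := th_shift h0 (inv_ne_zero hz) 1
  have e := th_symm h0 hp hz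
  rw [div_eq_mul_inv] at e
  rw [zpow_one, zpow_one, mul_comm z⁻¹ p, e,
    show E p 1 = -1 by simp [E]] at this
  rw [← this]; ring

/-! ### Theta functions modulo 10 -/
/-- The theta functions `j_a = (y^a, y^(10-a), y^10; y^10)_∞`. -/
noncomputable def jt (y : ℂ) (a : ℕ) : ℂ := th (y ^ 10) (y ^ a)

theorem norm_pow_lt {y : ℂ} (hy : ‖y‖ < 1) {n : ℕ} (hn : n ≠ 0) : ‖y ^ n‖ < 1 := by
  rw [norm_pow]; exact pow_lt_one₀ (norm_nonneg _) hy hn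

theorem jt_symm {y : ℂ} (h0 : y ≠ 0) (hy : ‖y‖ < 1) {a b : ℕ} (h : a + b = 10) :
    jt y b = jt y a := by
  rw [jt, jt, ← th_symm (pow_ne_zero _ h0) (norm_pow_lt hy (by norm_num)) (pow_ne_zero a h0)]
  congr 1
  rw [eq_div_iff (pow_ne_zero _ h0), ← pow_add, add_comm, h]

/-- `three_term` at `(y³, y, y², 1)`. -/
theorem rel_X {y : ℂ} (h0 : y ≠ 0) (hy : ‖y‖ < 1) :
    jt y 1 * jt y 3 ^ 3 + y * jt y 1 ^ 3 * jt y 5 = jt y 2 ^ 3 * jt y 4 := by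
  have h10 : y ^ 10 ≠ 0 := pow_ne_zero _ h0
  have hy10 := norm_pow_lt hy (n := 10) (by norm_num)
  have h := three_term h10 hy10 (pow_ne_zero 3 h0) h0 (pow_ne_zero 2 h0) one_ne_zero
  have hinv := th_inv h10 hy10 h0
  rw [show y ^ 3 * y = y ^ 4 by ring, show y ^ 3 / y = y ^ 2 by field_simp, mul_one, mul_one,
    mul_one, div_one, div_one, div_one, show y ^ 3 * y ^ 2 = y ^ 5 by ring,
    show y ^ 3 / y ^ 2 = y by field_simp, show y * y ^ 2 = y ^ 3 by ring,
    show y / y ^ 2 = y⁻¹ by field_simp, hinv] at h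
  have e : th (y ^ 10) y = jt y 1 := by rw [jt, pow_one]
  rw [e] at h
  change jt y 4 * jt y 2 / y ^ 3 * (jt y 2 * jt y 2 / y ^ 2) -
    jt y 5 * jt y 1 / y ^ 3 * (jt y 1 * jt y 1 / y) +
    jt y 3 * jt y 3 / y ^ 3 * (jt y 3 * (-y⁻¹ * jt y 1) / y) = 0 at h
  field_simp at h
  linear_combination -h

/-- `three_term` at `(y³, y, y⁴, y²)`. -/
theorem rel_Z {y : ℂ} (h0 : y ≠ 0) (hy : ‖y‖ < 1) :
    jt y 5 ^ 2 * jt y 1 * jt y 3 + y * jt y 1 ^ 2 * jt y 3 ^ 2 = jt y 2 ^ 2 * jt y 4 ^ 2 := by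
  have h10 : y ^ 10 ≠ 0 := pow_ne_zero _ h0
  have hy10 := norm_pow_lt hy (n := 10) (by norm_num)
  have h := three_term h10 hy10 (pow_ne_zero 3 h0) h0 (pow_ne_zero 4 h0) (pow_ne_zero 2 h0)
  have hinv := th_inv h10 hy10 h0
  have hinv3 := th_inv h10 hy10 (pow_ne_zero 3 h0)
  rw [show y ^ 3 * y = y ^ 4 by ring, show y ^ 3 / y = y ^ 2 by field_simp,
    show y ^ 4 * y ^ 2 = y ^ 6 by ring, show y ^ 4 / y ^ 2 = y ^ 2 by field_simp,
    show y ^ 3 * y ^ 4 = y ^ 7 by ring, show y ^ 3 / y ^ 4 = y⁻¹ by field_simp,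
    show y * y ^ 2 = y ^ 3 by ring, show y / y ^ 2 = y⁻¹ by field_simp,
    show y ^ 3 * y ^ 2 = y ^ 5 by ring, show y ^ 3 / y ^ 2 = y by field_simp,
    show y * y ^ 4 = y ^ 5 by ring, show y / y ^ 4 = (y ^ 3)⁻¹ by field_simp, hinv, hinv3] at h
  have e : th (y ^ 10) y = jt y 1 := by rw [jt, pow_one]
  rw [e] at h
  change jt y 4 * jt y 2 / y ^ 3 * (jt y 6 * jt y 2 / y ^ 4) -
    jt y 7 * (-y⁻¹ * jt y 1) / y ^ 3 * (jt y 3 * (-y⁻¹ * jt y 1) / y) +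
    jt y 5 * jt y 1 / y ^ 3 * (jt y 5 * (-(y ^ 3)⁻¹ * jt y 3) / y) = 0 at h
  rw [jt_symm h0 hy (a := 4) (b := 6) rfl, jt_symm h0 hy (a := 3) (b := 7) rfl] at h
  field_simp at h
  linear_combination -h

/-! ### The 5-dissection -/
theorem jt_ten {y : ℂ} (h0 : y ≠ 0) (hy : ‖y‖ < 1) : jt y 10 = 0 := by
  have := th_zpow (pow_ne_zero 10 h0) (norm_pow_lt hy (n := 10) (by norm_num)) 1
  rwa [zpow_one] at this

theorem jt_eleven {y : ℂ} (h0 : y ≠ 0) : y * jt y 11 = -jt y 1 := by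
  have := th_shift (pow_ne_zero 10 h0) (pow_ne_zero 1 h0) 1
  rw [zpow_one, zpow_one, ← pow_add, show E (y ^ 10) 1 = -1 by simp [E]] at this
  rw [jt, jt, ← this]; ring

theorem jt_ne_zero {y : ℂ} (h0 : y ≠ 0) (hy : ‖y‖ < 1) {a : ℕ} (h1 : a ≠ 0) (h2 : a < 10) :
    jt y a ≠ 0 := by
  have hn : 0 < ‖y‖ := norm_pos_iff.mpr h0
  refine th_ne_zero (pow_ne_zero _ h0) (norm_pow_lt hy (by norm_num)) (pow_ne_zero _ h0)
    (mul_zpow_ne_one (norm_pow_lt hy (by norm_num)) ?_ (norm_pow_lt hy h1))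
  rw [norm_pow, norm_pow]
  exact pow_lt_pow_right_of_lt_one₀ hn hy h2

/-- The poles in Kronecker's formula with `a = y^(1 + 2b)` and base `y^10` are avoided: the exponent
`1 + 2b + 10n` is odd. -/
theorem odd_ne_one {y : ℂ} (h0 : y ≠ 0) (hy : ‖y‖ < 1) (b : ℕ) (n : ℤ) :
    y ^ (1 + 2 * b) * (y ^ 10) ^ n ≠ 1 := by
  intro h
  have h := congrArg norm h
  rw [← zpow_natCast, ← zpow_natCast, ← zpow_mul, ← zpow_add₀ h0, norm_zpow, norm_one,
    zpow_eq_one_iff_right₀ (norm_nonneg _) hy.ne] at h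
  push_cast at h
  omega

/-- Kronecker's formula with base `q^10`, `a = q^5` and `x = q^s`, its summation index split
modulo 5. Each residue class is again an instance of Kronecker's formula, with base `q^50`. -/
theorem kronecker_dissect {q : ℂ} (h0 : q ≠ 0) (hq : ‖q‖ < 1) {s : ℕ} (hs : s ≠ 0)
    (hs' : s < 10) :
    qp (q ^ 10) (q ^ 10) ^ 3 * jt q (5 + s) / (jt q 5 * jt q s) =
      ∑ r : Fin 5, q ^ (s * (r : ℕ)) * (qp ((q ^ 5) ^ 10) ((q ^ 5) ^ 10) ^ 3 *
        jt (q ^ 5) (1 + 2 * r + s) / (jt (q ^ 5) (1 + 2 * r) * jt (q ^ 5) s)) := by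
  have hn : 0 < ‖q‖ := norm_pos_iff.mpr h0
  have hy0 : q ^ 5 ≠ 0 := pow_ne_zero _ h0
  have hy : ‖q ^ 5‖ < 1 := norm_pow_lt hq (by norm_num)
  have hpow : ∀ {z : ℂ}, z ≠ 0 → ‖z‖ < 1 → ‖z ^ 10‖ < ‖z ^ s‖ := fun hz hz1 => by
    rw [norm_pow, norm_pow]
    exact pow_lt_pow_right_of_lt_one₀ (norm_pos_iff.mpr hz) hz1 hs'
  have h := kronecker (pow_ne_zero 10 h0) (norm_pow_lt hq (n := 10) (by norm_num))
    (hpow h0 hq) (norm_pow_lt hq hs) (pow_ne_zero 5 h0) (odd_ne_one h0 hq 2)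
  rw [← pow_add] at h
  rw [← (Int.divModEquiv 5).symm.hasSum_iff, ← (Equiv.prodComm (Fin 5) ℤ).hasSum_iff] at h
  have h2 := h.prod_fiberwise (g := fun r : Fin 5 => q ^ (s * (r : ℕ)) *
      (qp ((q ^ 5) ^ 10) ((q ^ 5) ^ 10) ^ 3 *
        jt (q ^ 5) (1 + 2 * r + s) / (jt (q ^ 5) (1 + 2 * r) * jt (q ^ 5) s))) (fun r => by
    have h3 := kronecker (pow_ne_zero 10 hy0) (norm_pow_lt hy (n := 10) (by norm_num))
      (hpow hy0 hy) (norm_pow_lt hy hs) (pow_ne_zero (1 + 2 * (r : ℕ)) hy0) (odd_ne_one hy0 hy r)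
    rw [← pow_add] at h3
    refine (h3.mul_left (q ^ (s * (r : ℕ)))).congr_fun fun k => ?_
    have e1 : (q ^ s) ^ (k * 5 + ((r : ℕ) : ℤ)) = q ^ (s * (r : ℕ)) * ((q ^ 5) ^ s) ^ k := by
      rw [zpow_add₀ (pow_ne_zero _ h0), zpow_natCast, mul_comm k, zpow_mul, ← pow_mul,
        mul_comm]
      congr 2
      rw [← pow_mul, mul_comm, pow_mul]; norm_cast
    have e2 : q ^ 5 * (q ^ 10) ^ (k * 5 + ((r : ℕ) : ℤ)) =
        (q ^ 5) ^ (1 + 2 * (r : ℕ)) * ((q ^ 5) ^ 10) ^ k := by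
      rw [zpow_add₀ (pow_ne_zero _ h0), zpow_natCast, mul_comm k, zpow_mul]
      have : (q ^ 10) ^ (5 : ℤ) = (q ^ 5) ^ 10 := by norm_cast; ring
      rw [this]; ring
    simp only [Function.comp, Int.divModEquiv, Equiv.coe_fn_symm_mk, Equiv.prodComm_apply,
      Prod.swap_prod_mk]
    push_cast
    rw [e1, e2]
    ring)
  exact h2.unique (hasSum_fintype _)

/-- The product `(y^i; y^10)_∞`. -/
noncomputable def ee (y : ℂ) (i : ℕ) : ℂ := qp (y ^ i) (y ^ 10)

theorem ee_ne_zero {y : ℂ} (hy : ‖y‖ < 1) {i : ℕ} (hi : i ≠ 0) : ee y i ≠ 0 := by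
  refine qp_ne_zero (norm_pow_lt hy (by norm_num)) fun k h => ?_
  have h := congrArg norm h
  rw [← pow_mul, ← pow_add, norm_one] at h
  exact (norm_pow_lt hy (by omega)).ne h

theorem jt_eq {y : ℂ} (h0 : y ≠ 0) (hy : ‖y‖ < 1) {a b : ℕ} (h : a + b = 10) :
    jt y a = ee y a * ee y b * ee y 10 := by
  have : y ^ 10 / y ^ a = y ^ b := by
    rw [div_eq_iff (pow_ne_zero _ h0), ← pow_add, add_comm, h]
  rw [jt, jtp (pow_ne_zero _ h0) (norm_pow_lt hy (by norm_num)) (pow_ne_zero _ h0), this]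
  rfl

theorem qp_odd {y : ℂ} (hy : ‖y‖ < 1) :
    qp y (y ^ 2) = ee y 1 * ee y 3 * ee y 5 * ee y 7 * ee y 9 := by
  have h := qp_dissect (norm_pow_lt hy two_ne_zero) y 5
  rw [h, Fin.prod_univ_five]
  simp only [ee, ← pow_mul, ← pow_succ']
  norm_num

theorem qp_even {y : ℂ} (hy : ‖y‖ < 1) :
    qp (y ^ 2) (y ^ 2) = ee y 2 * ee y 4 * ee y 6 * ee y 8 * ee y 10 := by
  have h := qp_dissect (norm_pow_lt hy two_ne_zero) (y ^ 2) 5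
  rw [h, Fin.prod_univ_five]
  simp only [ee, ← pow_mul, ← pow_add]
  norm_num

/-- The prefactor arising in the product of the two dissected quotients, in terms of `q^5`. -/
theorem dissect_const {q : ℂ} (h0 : q ≠ 0) (hq : ‖q‖ < 1) :
    (jt q 5 * ee (q ^ 5) 10 ^ 3 / qp (q ^ 10) (q ^ 10) ^ 3) ^ 2 /
        (jt (q ^ 5) 1 * jt (q ^ 5) 2) =
      jt (q ^ 5) 1 ^ 3 * jt (q ^ 5) 3 ^ 4 * jt (q ^ 5) 5 ^ 2 /
        (jt (q ^ 5) 2 ^ 5 * jt (q ^ 5) 4 ^ 4) := by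
  have hy0 : q ^ 5 ≠ 0 := pow_ne_zero _ h0
  have hy : ‖q ^ 5‖ < 1 := norm_pow_lt hq (by norm_num)
  have e : jt q 5 = qp (q ^ 5) ((q ^ 5) ^ 2) ^ 2 * qp ((q ^ 5) ^ 2) ((q ^ 5) ^ 2) := by
    rw [jt_eq h0 hq (a := 5) (b := 5) rfl, ee, ee, ← pow_mul]; ring
  have e' : qp (q ^ 10) (q ^ 10) = qp ((q ^ 5) ^ 2) ((q ^ 5) ^ 2) := by rw [← pow_mul]
  rw [e, e', qp_odd hy, qp_even hy, jt_eq hy0 hy (a := 1) (b := 9) rfl,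
    jt_eq hy0 hy (a := 2) (b := 8) rfl, jt_eq hy0 hy (a := 3) (b := 7) rfl,
    jt_eq hy0 hy (a := 4) (b := 6) rfl, jt_eq hy0 hy (a := 5) (b := 5) rfl]
  have n1 := ee_ne_zero hy one_ne_zero
  have n2 := ee_ne_zero hy two_ne_zero
  have n3 := ee_ne_zero hy three_ne_zero
  have n4 := ee_ne_zero hy four_ne_zero
  have n5 := ee_ne_zero hy (i := 5) (by norm_num)
  have n6 := ee_ne_zero hy (i := 6) (by norm_num)
  have n7 := ee_ne_zero hy (i := 7) (by norm_num)
  have n8 := ee_ne_zero hy (i := 8) (by norm_num)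
  have n9 := ee_ne_zero hy (i := 9) (by norm_num)
  have n10 := ee_ne_zero hy (i := 10) (by norm_num)
  field_simp

/-- The 5-dissection of `j_3 j_4 / (j_1 j_2)`. The quotients `j_4 / j_1` and `j_3 / j_2` are dissected
by Kronecker's formula with `s = 1` and `s = 2`; in their product each residue class is a sum of
several terms, which `rel_X` and `rel_Z` collapse to a single product. -/
theorem dissection {q : ℂ} (h0 : q ≠ 0) (hq : ‖q‖ < 1) {y : ℂ} (hy' : y = q ^ 5) :
    jt q 3 * jt q 4 / (jt q 1 * jt q 2) =
      jt y 3 ^ 2 * jt y 5 ^ 2 / (jt y 2 * jt y 4 ^ 3) +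
      q * (jt y 1 * jt y 3 ^ 3 / (jt y 2 ^ 3 * jt y 4)) +
      q ^ 2 * (2 * (jt y 1 * jt y 3 ^ 2 * jt y 5 / (jt y 2 ^ 2 * jt y 4 ^ 2))) +
      q ^ 3 * (jt y 1 ^ 2 * jt y 3 * jt y 5 / (jt y 2 ^ 3 * jt y 4)) +
      q ^ 4 * (jt y 1 * jt y 3 ^ 2 * jt y 5 / (jt y 2 * jt y 4 ^ 3)) := by
  have hy0 : q ^ 5 ≠ 0 := pow_ne_zero _ h0
  have hy : ‖q ^ 5‖ < 1 := norm_pow_lt hq (by norm_num)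
  have d1 := kronecker_dissect h0 hq (s := 1) (by norm_num) (by norm_num)
  have d2 := kronecker_dissect h0 hq (s := 2) (by norm_num) (by norm_num)
  have hc := dissect_const h0 hq
  have hX := rel_X hy0 hy
  have hZ := rel_Z hy0 hy
  have h11 := jt_eleven hy0
  rw [show qp ((q ^ 5) ^ 10) ((q ^ 5) ^ 10) = ee (q ^ 5) 10 from rfl] at d1 d2
  rw [Fin.sum_univ_five] at d1 d2
  norm_num at d1 d2
  rw [jt_symm h0 hq (a := 4) (b := 6) rfl] at d1
  rw [jt_symm h0 hq (a := 3) (b := 7) rfl] at d2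
  rw [← hy'] at d1 d2 hc hX hZ h11 hy0 hy
  rw [jt_symm hy0 hy (a := 4) (b := 6) rfl, jt_symm hy0 hy (a := 3) (b := 7) rfl,
    jt_symm hy0 hy (a := 2) (b := 8) rfl, jt_ten hy0 hy] at d1
  rw [jt_symm hy0 hy (a := 1) (b := 9) rfl, jt_symm hy0 hy (a := 3) (b := 7) rfl] at d2
  have m1 := jt_ne_zero h0 hq (a := 1) (by norm_num) (by norm_num)
  have m2 := jt_ne_zero h0 hq (a := 2) (by norm_num) (by norm_num)
  have m5 := jt_ne_zero h0 hq (a := 5) (by norm_num) (by norm_num)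
  have n1 := jt_ne_zero hy0 hy (a := 1) (by norm_num) (by norm_num)
  have n2 := jt_ne_zero hy0 hy (a := 2) (by norm_num) (by norm_num)
  have n3 := jt_ne_zero hy0 hy (a := 3) (by norm_num) (by norm_num)
  have n4 := jt_ne_zero hy0 hy (a := 4) (by norm_num) (by norm_num)
  have n5 := jt_ne_zero hy0 hy (a := 5) (by norm_num) (by norm_num)
  have hJ : qp (q ^ 10) (q ^ 10) ≠ 0 := ee_ne_zero hq (i := 10) (by norm_num)
  generalize qp (q ^ 10) (q ^ 10) = J at *
  generalize ee y 10 = e10 at *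
  generalize jt y 11 = j11 at *
  generalize jt y 1 = j1 at *
  generalize jt y 2 = j2 at *
  generalize jt y 3 = j3 at *
  generalize jt y 4 = j4 at *
  generalize jt y 5 = j5 at *
  generalize jt q 1 = k1 at *
  generalize jt q 2 = k2 at *
  generalize jt q 3 = k3 at *
  generalize jt q 4 = k4 at *
  generalize jt q 5 = k5 at *
  have h11' : j11 = -j1 / y := by field_simp; linear_combination h11
  have D1 : k4 / k1 = k5 * e10 ^ 3 / J ^ 3 / j1 *
      (j2 / j1 + q * (j4 / j3) + q ^ 2 * (j4 / j5) + q ^ 3 * (j2 / j3)) := by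
    have : k4 / k1 = (J ^ 3 * k4 / (k5 * k1)) * (k5 / J ^ 3) := by field_simp
    rw [this, d1]
    field_simp
    ring
  have D2 : k3 / k2 = k5 * e10 ^ 3 / J ^ 3 / j2 *
      (j3 / j1 + q ^ 2 * (j5 / j3) + q ^ 4 * (j3 / j5) + q ^ 6 * (j1 / j3) - q ^ 3) := by
    have : k3 / k2 = (J ^ 3 * k3 / (k5 * k2)) * (k5 / J ^ 3) := by field_simp
    rw [this, d2, h11', hy']
    field_simp
    ring
  have hX' : j3 ^ 3 + y * j1 ^ 2 * j5 = j2 ^ 3 * j4 / j1 := by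
    field_simp; linear_combination hX
  have hZ' : j5 ^ 2 + y * j1 * j3 = j2 ^ 2 * j4 ^ 2 / (j1 * j3) := by
    field_simp; linear_combination hZ
  calc k3 * k4 / (k1 * k2) = (k4 / k1) * (k3 / k2) := by field_simp
    _ = (k5 * e10 ^ 3 / J ^ 3) ^ 2 / (j1 * j2) *
        ((j2 / j1 + q * (j4 / j3) + q ^ 2 * (j4 / j5) + q ^ 3 * (j2 / j3)) *
        (j3 / j1 + q ^ 2 * (j5 / j3) + q ^ 4 * (j3 / j5) + q ^ 6 * (j1 / j3) - q ^ 3)) := by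
      rw [D1, D2]; field_simp
    _ = j1 ^ 3 * j3 ^ 4 * j5 ^ 2 / (j2 ^ 5 * j4 ^ 4) *
        (j2 * (j3 ^ 3 + y * j1 ^ 2 * j5) / (j1 ^ 2 * j3 ^ 2) +
        q * (j4 * (j5 ^ 2 + y * j1 * j3) / (j1 * j5 ^ 2)) +
        q ^ 2 * (j2 * (j5 ^ 2 + y * j1 * j3) / (j1 * j3 * j5) +
          j4 * (j3 ^ 3 + y * j1 ^ 2 * j5) / (j1 * j3 ^ 2 * j5)) +
        q ^ 3 * (j4 * (j5 ^ 2 + y * j1 * j3) / (j3 ^ 2 * j5)) +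
        q ^ 4 * (j2 * (j3 ^ 3 + y * j1 ^ 2 * j5) / (j1 * j5 * j3 ^ 2))) := by
      rw [hc]
      congr 1
      rw [hy']
      field_simp
      ring
    _ = _ := by
      rw [hX', hZ']
      field_simp
      ring

/-! ### Power series with nonnegative coefficients -/

/-- On the unit disc `f` is the sum of the power series with coefficients `c n ≥ 0`. -/
def HasCoeff (c : ℕ → ℝ) (f : ℂ → ℂ) : Prop :=
  (∀ n, 0 ≤ c n) ∧ ∀ u : ℂ, ‖u‖ < 1 → HasSum (fun n => (c n : ℂ) * u ^ n) (f u)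

/-- The coefficients of the product of two power series. -/
def conv (c d : ℕ → ℝ) (n : ℕ) : ℝ := ∑ kl ∈ antidiagonal n, c kl.1 * d kl.2

theorem HasCoeff.mul {c d : ℕ → ℝ} {f g : ℂ → ℂ} (hf : HasCoeff c f) (hg : HasCoeff d g) :
    HasCoeff (conv c d) (fun u => f u * g u) := by
  refine ⟨fun n => sum_nonneg fun kl _ => mul_nonneg (hf.1 _) (hg.1 _), fun u hu => ?_⟩
  have h1 := hf.2 u hu
  have h2 := hg.2 u hu
  have hs := summable_norm_sum_mul_antidiagonal_of_summable_norm h1.summable.norm h2.summable.norm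
  have ht := tsum_mul_tsum_eq_tsum_sum_antidiagonal_of_summable_norm h1.summable.norm
    h2.summable.norm
  rw [h1.tsum_eq, h2.tsum_eq] at ht
  show HasSum _ (f u * g u)
  rw [ht]
  refine hs.of_norm.hasSum.congr_fun fun n => ?_
  rw [conv, Complex.ofReal_sum, sum_mul]
  refine sum_congr rfl fun kl hkl => ?_
  rw [← mem_antidiagonal.mp hkl, Complex.ofReal_mul]
  ring

theorem le_conv_left {c d : ℕ → ℝ} (hc : ∀ n, 0 ≤ c n) (hd : ∀ n, 0 ≤ d n) (hd0 : d 0 = 1)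
    (n : ℕ) : c n ≤ conv c d n := by
  have h : (n, 0) ∈ antidiagonal n := mem_antidiagonal.mpr (add_zero n)
  have := single_le_sum (f := fun kl : ℕ × ℕ => c kl.1 * d kl.2)
    (fun kl _ => mul_nonneg (hc kl.1) (hd kl.2)) h
  simpa [hd0, conv] using this

theorem conv_zero (c d : ℕ → ℝ) : conv c d 0 = c 0 * d 0 := by simp [conv]

theorem conv_one (c d : ℕ → ℝ) : conv c d 1 = c 0 * d 1 + c 1 * d 0 := by
  simp [conv, Finset.Nat.antidiagonal_succ]

/-- `f` is a power series on the unit disc with nonnegative coefficients and constant term 1 and, in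
case `P` holds, without linear term. The parameter `P` treats both cases at once. -/
def Good (P : Prop) (f : ℂ → ℂ) : Prop := ∃ c, HasCoeff c f ∧ c 0 = 1 ∧ (P → c 1 = 0)

theorem Good.mul {P : Prop} {f g : ℂ → ℂ} (hf : Good P f) (hg : Good P g) :
    Good P (fun u => f u * g u) := by
  obtain ⟨c, hc, hc0, hc1⟩ := hf
  obtain ⟨d, hd, hd0, hd1⟩ := hg
  refine ⟨conv c d, hc.mul hd, by rw [conv_zero, hc0, hd0, one_mul], fun hP => ?_⟩
  rw [conv_one, hc1 hP, hd1 hP, mul_zero, zero_mul, add_zero]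

theorem Good.one (P : Prop) : Good P (fun _ => 1) := by
  refine ⟨fun n => if n = 0 then 1 else 0, ⟨fun n => by positivity, fun u _ => ?_⟩, by simp,
    by simp⟩
  have := hasSum_single (f := fun n : ℕ => (((if n = 0 then 1 else 0 : ℝ) : ℂ)) * u ^ n) 0
    (fun n hn => by simp [hn])
  simpa using this

theorem Good.pow {P : Prop} {f : ℂ → ℂ} (hf : Good P f) (k : ℕ) : Good P (fun u => f u ^ k) := by
  induction k with
  | zero => simpa using Good.one P
  | succ k ih => simpa only [pow_succ] using ih.mul hf

theorem Good.one_add_pow {P : Prop} {m : ℕ} (hm : m ≠ 0) (hP : P → m ≠ 1) :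
    Good P (fun u => 1 + u ^ m) := by
  refine ⟨fun n => (if n = 0 then 1 else 0) + if n = m then 1 else 0,
    ⟨fun n => by positivity, fun u _ => ?_⟩, by simp [hm.symm], fun h => by simp [(hP h).symm]⟩
  have h1 := hasSum_ite_eq (0 : ℕ) (1 : ℂ)
  have h2 := hasSum_ite_eq m (u ^ m)
  refine (h1.add h2).congr_fun fun n => ?_
  by_cases h : n = 0 <;> by_cases h' : n = m <;> simp [h, h', add_mul] <;> simp_all

theorem Good.inv_one_sub_pow {P : Prop} {m : ℕ} (hm : m ≠ 0) (hP : P → m ≠ 1) :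
    Good P (fun u => (1 - u ^ m)⁻¹) := by
  refine ⟨fun n => if m ∣ n then 1 else 0,
    ⟨fun n => by positivity, fun u hu => ?_⟩, by simp, fun h => by simp [hP h]⟩
  have h1 := hasSum_geometric_of_norm_lt_one (norm_pow_lt hu hm)
  have hinj : Function.Injective fun k : ℕ => m * k := mul_right_injective₀ hm
  rw [← hinj.hasSum_iff]
  · refine h1.congr_fun fun k => ?_
    simp [pow_mul]
  · intro n hn
    have : ¬ m ∣ n := fun ⟨k, hk⟩ => hn ⟨k, hk.symm⟩
    simp [this]

/-- A pointwise limit of partial products of series with nonnegative coefficients and constant term 1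
is again such a series: the coefficients increase along the partial products. -/
theorem Good.tprod {P : Prop} {f : ℕ → ℂ → ℂ} (hf : ∀ k, Good P (f k)) {F : ℂ → ℂ}
    (hF : ∀ u : ℂ, ‖u‖ < 1 → Tendsto (fun N => ∏ k ∈ range N, f k u) atTop (𝓝 (F u))) :
    Good P F := by
  choose d hd hd0 hd1 using hf
  obtain ⟨c1, hc1, hc10, hc11⟩ := Good.one P
  obtain ⟨c, hcz, hcs⟩ : ∃ c : ℕ → ℕ → ℝ, c 0 = c1 ∧ ∀ N, c (N + 1) = conv (c N) (d N) :=
    ⟨fun N => Nat.rec c1 (fun N cN => conv cN (d N)) N, rfl, fun N => rfl⟩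
  have hc : ∀ N, HasCoeff (c N) (fun u => ∏ k ∈ range N, f k u) := by
    intro N
    induction N with
    | zero =>
      simpa only [prod_range_zero, hcz] using hc1
    | succ N ih =>
      simp only [prod_range_succ, hcs]
      exact ih.mul (hd N)
  have hc0 : ∀ N, c N 0 = 1 := by
    intro N
    induction N with
    | zero => rw [hcz, hc10]
    | succ N ih => rw [hcs, conv_zero, ih, hd0, one_mul]
  have hcP : P → ∀ N, c N 1 = 0 := by
    intro hP N
    induction N with
    | zero => rw [hcz, hc11 hP]
    | succ N ih => rw [hcs, conv_one, ih, hd1 N hP, mul_zero, zero_mul, add_zero]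
  have hmono : ∀ n, Monotone fun N => c N n := fun n => monotone_nat_of_le_succ fun N => by
    rw [hcs]
    exact le_conv_left (hc N).1 (hd N).1 (hd0 N) n
  -- at a real point `r`, finite sums of nonnegative terms are bounded by the value of the product
  have hreal : ∀ r : ℝ, 0 ≤ r → r < 1 → ∀ N, HasSum (fun n => c N n * r ^ n)
      (∏ k ∈ range N, f k r).re := by
    intro r hr0 hr1 N
    have := (hc N).2 r (by rwa [Complex.norm_real, Real.norm_of_nonneg hr0])
    refine (Complex.hasSum_re this).congr_fun fun n => ?_
    norm_cast
  have hlimre : ∀ r : ℝ, 0 ≤ r → r < 1 →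
      Tendsto (fun N => (∏ k ∈ range N, f k r).re) atTop (𝓝 (F r).re) := by
    intro r hr0 hr1
    exact (Complex.continuous_re.tendsto _).comp
      (hF r (by rwa [Complex.norm_real, Real.norm_of_nonneg hr0]))
  have hbdd : ∀ n, BddAbove (Set.range fun N => c N n) := by
    intro n
    have h1 := (hlimre (1 / 2) (by norm_num) (by norm_num)).bddAbove_range
    obtain ⟨C, hC⟩ := h1
    refine ⟨C / (1 / 2) ^ n, ?_⟩
    rintro _ ⟨N, rfl⟩
    rw [le_div_iff₀ (by positivity)]
    refine le_trans ?_ (hC ⟨N, rfl⟩)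
    exact le_hasSum (hreal (1 / 2) (by norm_num) (by norm_num) N) n
      fun k _ => mul_nonneg ((hc N).1 k) (by positivity)
  let a : ℕ → ℝ := fun n => ⨆ N, c N n
  have hlim : ∀ n, Tendsto (fun N => c N n) atTop (𝓝 (a n)) := fun n =>
    tendsto_atTop_ciSup (hmono n) (hbdd n)
  have hle : ∀ N n, c N n ≤ a n := fun N n => le_ciSup (hbdd n) N
  have ha0 : ∀ n, 0 ≤ a n := fun n => ((hc 0).1 n).trans (hle 0 n)
  have hsum : ∀ r : ℝ, 0 ≤ r → r < 1 → Summable fun n => a n * r ^ n := by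
    intro r hr0 hr1
    refine summable_of_sum_le (c := (F r).re) (fun n => mul_nonneg (ha0 n) (by positivity))
      fun s => ?_
    refine le_of_tendsto_of_tendsto (tendsto_finsetSum s fun n _ => (hlim n).mul_const (r ^ n))
      (hlimre r hr0 hr1) (.of_forall fun N => ?_)
    exact sum_le_hasSum s (fun k _ => mul_nonneg ((hc N).1 k) (by positivity)) (hreal r hr0 hr1 N)
  refine ⟨a, ⟨ha0, fun u hu => ?_⟩, ?_, fun hP => ?_⟩
  · have hs := hsum ‖u‖ (norm_nonneg _) hu
    have hn : ∀ n, ‖(a n : ℂ) * u ^ n‖ = a n * ‖u‖ ^ n := fun n => by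
      rw [norm_mul, norm_pow, Complex.norm_real, Real.norm_of_nonneg (ha0 n)]
    have h1 : Tendsto (fun N : ℕ => ∑' n : ℕ, Complex.ofReal (c N n) * u ^ n) atTop
        (𝓝 (∑' n : ℕ, Complex.ofReal (a n) * u ^ n)) := by
      refine tendsto_tsum_of_dominated_convergence hs (fun n => ?_) (.of_forall fun N n => ?_)
      · exact (((Complex.continuous_ofReal.tendsto (a n)).comp (hlim n)).mul_const (u ^ n))
      · rw [norm_mul, norm_pow, Complex.norm_real, Real.norm_of_nonneg ((hc N).1 n)]
        exact mul_le_mul_of_nonneg_right (hle N n) (by positivity)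
    have h2 := tendsto_nhds_unique (h1.congr fun N => ((hc N).2 u hu).tsum_eq) (hF u hu)
    rw [← h2]
    exact (Summable.of_norm (by simpa only [hn] using hs)).hasSum
  · exact tendsto_nhds_unique (hlim 0) (by simp only [hc0]; exact tendsto_const_nhds)
  · exact tendsto_nhds_unique (hlim 1) (by simp only [hcP hP]; exact tendsto_const_nhds)

/-! ### Positivity of the five components -/

/-- The product `(-u^i; u^10)_∞`. -/
noncomputable def oo (i : ℕ) (u : ℂ) : ℂ := qp (-u ^ i) (u ^ 10)

/-- The product `1 / (u^i; u^10)_∞`. -/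
noncomputable def vv (i : ℕ) (u : ℂ) : ℂ := (qp (u ^ i) (u ^ 10))⁻¹

theorem good_oo {P : Prop} {i : ℕ} (hi : i ≠ 0) (hP : P → i ≠ 1) : Good P (oo i) := by
  refine Good.tprod (f := fun k u => 1 + u ^ (i + 10 * k))
    (fun k => Good.one_add_pow (by omega) fun h => by have := hP h; omega) fun u hu => ?_
  refine (qp_tendsto (norm_pow_lt hu (n := 10) (by norm_num)) (-u ^ i)).congr fun N => ?_
  refine prod_congr rfl fun k _ => ?_
  rw [pow_add, pow_mul]; ring

theorem good_vv {P : Prop} {i : ℕ} (hi : i ≠ 0) (hP : P → i ≠ 1) : Good P (vv i) := by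
  refine Good.tprod (f := fun k u => (1 - u ^ (i + 10 * k))⁻¹)
    (fun k => Good.inv_one_sub_pow (by omega) fun h => by have := hP h; omega) fun u hu => ?_
  have h := (qp_tendsto (norm_pow_lt hu (n := 10) (by norm_num)) (u ^ i)).inv₀ (ee_ne_zero hu hi)
  refine h.congr fun N => ?_
  rw [← Finset.prod_inv_distrib]
  refine prod_congr rfl fun k _ => ?_
  rw [pow_add, pow_mul]

theorem one_sub_pow_ne {u : ℂ} (hu : ‖u‖ < 1) {m : ℕ} (hm : m ≠ 0) : 1 - u ^ m ≠ 0 := by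
  refine sub_ne_zero.mpr fun h => ?_
  have := norm_pow_lt hu hm
  rw [← h, norm_one] at this
  exact lt_irrefl _ this

theorem oo_split {u : ℂ} (hu : ‖u‖ < 1) (i : ℕ) : oo i u = (1 + u ^ i) * oo (i + 10) u := by
  rw [oo, qp_split (norm_pow_lt hu (n := 10) (by norm_num)), oo]
  congr 1
  · ring
  · congr 1; ring

theorem vv_split {u : ℂ} (hu : ‖u‖ < 1) (i : ℕ) : vv i u = (1 - u ^ i)⁻¹ * vv (i + 10) u := by
  rw [vv, qp_split (norm_pow_lt hu (n := 10) (by norm_num)), vv, mul_inv, ← pow_add]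

/-- `(1 + u) / (1 - u²) = 1 / (1 - u)` has positive coefficients, so every multiple of it by a
`Good` series has positive coefficients. -/
theorem strict_pos {f : ℂ → ℂ} (hf : Good False f) :
    ∃ α : ℕ → ℝ, HasCoeff α (fun u => oo 1 u * vv 2 u * f u) ∧ ∀ n, 0 < α n := by
  obtain ⟨c, hc, hc0, -⟩ := ((good_oo (P := False) (i := 11) (by norm_num) (by simp)).mul
    (good_vv (i := 12) (by norm_num) (by simp))).mul hf
  have hg : HasCoeff (fun _ => 1) (fun u => (1 - u)⁻¹) := ⟨fun _ => zero_le_one, fun u hu => by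
    simpa using hasSum_geometric_of_norm_lt_one hu⟩
  have h := hg.mul hc
  refine ⟨_, ⟨h.1, fun u hu => ?_⟩, fun n => one_pos.trans_le (le_conv_left hg.1 hc.1 hc0 n)⟩
  have := h.2 u hu
  beta_reduce at this ⊢
  rw [show oo 1 u * vv 2 u * f u = (1 - u)⁻¹ * (oo 11 u * vv 12 u * f u) from ?_]
  · exact this
  · rw [oo_split hu 1, vv_split hu 2]
    have h1 := one_sub_pow_ne hu one_ne_zero
    have h2 := one_sub_pow_ne hu two_ne_zero
    rw [pow_one] at *
    field_simp
    ring

/-- `(1 + u³) / (1 - u²) = 1 / (1 - u) - u` has coefficients 1, except that of `u`. -/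
theorem strict_pos_zero {f : ℂ → ℂ} (hf : Good True f) :
    ∃ α : ℕ → ℝ, HasCoeff α (fun u => oo 3 u * vv 2 u * f u) ∧ α 1 = 0 ∧
      ∀ n, n ≠ 1 → 0 < α n := by
  obtain ⟨c, hc, hc0, hc1⟩ := ((good_oo (P := True) (i := 13) (by norm_num) (by simp)).mul
    (good_vv (i := 12) (by norm_num) (by simp))).mul hf
  have hg : HasCoeff (fun n => if n = 1 then 0 else 1) (fun u => (1 - u)⁻¹ - u) := by
    refine ⟨fun n => by positivity, fun u hu => ?_⟩
    have := (hasSum_geometric_of_norm_lt_one hu).sub (hasSum_ite_eq 1 u)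
    refine this.congr_fun fun n => ?_
    by_cases h : n = 1 <;> simp [h]
  have h := hg.mul hc
  refine ⟨_, ⟨h.1, fun u hu => ?_⟩, ?_, fun n hn => ?_⟩
  · have := h.2 u hu
    beta_reduce at this ⊢
    rw [show oo 3 u * vv 2 u * f u = ((1 - u)⁻¹ - u) * (oo 13 u * vv 12 u * f u) from ?_]
    · exact this
    · rw [oo_split hu 3, vv_split hu 2]
      have h1 := one_sub_pow_ne hu one_ne_zero
      have h2 := one_sub_pow_ne hu two_ne_zero
      rw [pow_one] at h1
      field_simp
      ring
  · rw [conv_one, hc1 trivial]; simp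
  · refine lt_of_lt_of_le ?_ (le_conv_left hg.1 hc.1 hc0 n)
    simp [hn]

theorem ee_neg_odd {u : ℂ} {i : ℕ} (hi : Odd i) : ee (-u) i = oo i u := by
  rw [ee, oo, hi.neg_pow, Even.neg_pow (by decide)]

theorem ee_neg_even {u : ℂ} {i : ℕ} (hi : Even i) : ee (-u) i = (vv i u)⁻¹ := by
  rw [ee, vv, inv_inv, hi.neg_pow, Even.neg_pow (by decide)]

theorem jt_neg_odd {u : ℂ} (h0 : u ≠ 0) (hu : ‖u‖ < 1) {a b : ℕ} (h : a + b = 10) (ha : Odd a) :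
    jt (-u) a = oo a u * oo b u * ee (-u) 10 := by
  have hb : Odd b := by
    rw [Nat.odd_iff] at *; omega
  rw [jt_eq (neg_ne_zero.mpr h0) (by rwa [norm_neg]) h, ee_neg_odd ha, ee_neg_odd hb]

theorem jt_neg_even {u : ℂ} (h0 : u ≠ 0) (hu : ‖u‖ < 1) {a b : ℕ} (h : a + b = 10)
    (ha : Even a) : jt (-u) a = (vv a u * vv b u)⁻¹ * ee (-u) 10 := by
  have hb : Even b := by
    rw [Nat.even_iff] at *; omega
  rw [jt_eq (neg_ne_zero.mpr h0) (by rwa [norm_neg]) h, ee_neg_even ha, ee_neg_even hb, mul_inv]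

/-- Transfers an expansion in powers of `u` to one in powers of `-y`, via `u = -y`. The hypothesis on
`ee (-u) 10` is there for the cancellation of the common factor `(y^10; y^10)_∞` of all `j_a`. -/
theorem comp_aux {f g : ℂ → ℂ} {α : ℕ → ℝ} (h : HasCoeff α f)
    (hfg : ∀ u : ℂ, u ≠ 0 → ‖u‖ < 1 → ee (-u) 10 ≠ 0 → g (-u) = f u) {y : ℂ} (h0 : y ≠ 0)
    (hy : ‖y‖ < 1) : HasSum (fun n => (α n : ℂ) * (-y) ^ n) (g y) := by
  have := h.2 (-y) (by rwa [norm_neg])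
  rwa [← hfg (-y) (neg_ne_zero.mpr h0) (by rwa [norm_neg])
    (by rw [neg_neg]; exact ee_ne_zero hy (by norm_num)), neg_neg] at this

/-- The component of the residue class 0: it contains no factor `1 + u`, so its second coefficient
vanishes. -/
theorem comp_zero : ∃ α : ℕ → ℝ, (α 1 = 0 ∧ ∀ n, n ≠ 1 → 0 < α n) ∧
    ∀ y : ℂ, y ≠ 0 → ‖y‖ < 1 → HasSum (fun n => (α n : ℂ) * (-y) ^ n)
      (jt y 3 ^ 2 * jt y 5 ^ 2 / (jt y 2 * jt y 4 ^ 3)) := by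
  have o (i : ℕ) (h : i ≠ 0) (h1 : i ≠ 1) : Good True (oo i) := good_oo h fun _ => h1
  have v (i : ℕ) (h : i ≠ 0) (h1 : i ≠ 1) : Good True (vv i) := good_vv h fun _ => h1
  obtain ⟨α, hα, hpos⟩ := strict_pos_zero
    (((((o 3 (by simp) (by simp)).mul ((o 7 (by simp) (by simp)).pow 2)).mul
      ((o 5 (by simp) (by simp)).pow 4)).mul (v 8 (by simp) (by simp))).mul
      (((v 4 (by simp) (by simp)).mul (v 6 (by simp) (by simp))).pow 3))
  refine ⟨α, hpos, fun y h0 hy => comp_aux hα (g := fun y =>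
    jt y 3 ^ 2 * jt y 5 ^ 2 / (jt y 2 * jt y 4 ^ 3)) (fun u h0 hu h10 => ?_) h0 hy⟩
  rw [jt_neg_odd h0 hu (a := 3) (b := 7) rfl (by decide),
    jt_neg_odd h0 hu (a := 5) (b := 5) rfl (by decide),
    jt_neg_even h0 hu (a := 2) (b := 8) rfl (by decide),
    jt_neg_even h0 hu (a := 4) (b := 6) rfl (by decide)]
  field_simp

theorem comp_pos {f g : ℂ → ℂ} (hf : Good False f)
    (hfg : ∀ u : ℂ, u ≠ 0 → ‖u‖ < 1 → ee (-u) 10 ≠ 0 → g (-u) = oo 1 u * vv 2 u * f u) :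
    ∃ α : ℕ → ℝ, (∀ n, 0 < α n) ∧
      ∀ y : ℂ, y ≠ 0 → ‖y‖ < 1 → HasSum (fun n => (α n : ℂ) * (-y) ^ n) (g y) := by
  obtain ⟨α, hα, hpos⟩ := strict_pos hf
  exact ⟨α, hpos, fun y h0 hy => comp_aux hα hfg h0 hy⟩

theorem goodO (i : ℕ) (h : i ≠ 0) : Good False (oo i) := good_oo h False.elim

theorem goodV (i : ℕ) (h : i ≠ 0) : Good False (vv i) := good_vv h False.elim

theorem comp_one : ∃ α : ℕ → ℝ, (∀ n, 0 < α n) ∧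
    ∀ y : ℂ, y ≠ 0 → ‖y‖ < 1 → HasSum (fun n => (α n : ℂ) * (-y) ^ n)
      (jt y 1 * jt y 3 ^ 3 / (jt y 2 ^ 3 * jt y 4)) := by
  refine comp_pos (g := fun y => jt y 1 * jt y 3 ^ 3 / (jt y 2 ^ 3 * jt y 4))
    ((((goodO 9 (by simp)).mul (((goodO 3 (by simp)).mul (goodO 7 (by simp))).pow 3)).mul
      (((goodV 2 (by simp)).pow 2).mul ((goodV 8 (by simp)).pow 3))).mul
      ((goodV 4 (by simp)).mul (goodV 6 (by simp)))) fun u h0 hu h10 => ?_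
  rw [jt_neg_odd h0 hu (a := 1) (b := 9) rfl (by decide),
    jt_neg_odd h0 hu (a := 3) (b := 7) rfl (by decide),
    jt_neg_even h0 hu (a := 2) (b := 8) rfl (by decide),
    jt_neg_even h0 hu (a := 4) (b := 6) rfl (by decide)]
  field_simp

theorem comp_two : ∃ α : ℕ → ℝ, (∀ n, 0 < α n) ∧
    ∀ y : ℂ, y ≠ 0 → ‖y‖ < 1 → HasSum (fun n => (α n : ℂ) * (-y) ^ n)
      (jt y 1 * jt y 3 ^ 2 * jt y 5 / (jt y 2 ^ 2 * jt y 4 ^ 2)) := by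
  refine comp_pos (g := fun y => jt y 1 * jt y 3 ^ 2 * jt y 5 / (jt y 2 ^ 2 * jt y 4 ^ 2))
    ((((goodO 9 (by simp)).mul (((goodO 3 (by simp)).mul (goodO 7 (by simp))).pow 2)).mul
      (((goodO 5 (by simp)).pow 2).mul ((goodV 2 (by simp)).mul ((goodV 8 (by simp)).pow 2)))).mul
      (((goodV 4 (by simp)).mul (goodV 6 (by simp))).pow 2)) fun u h0 hu h10 => ?_
  rw [jt_neg_odd h0 hu (a := 1) (b := 9) rfl (by decide),
    jt_neg_odd h0 hu (a := 3) (b := 7) rfl (by decide),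
    jt_neg_odd h0 hu (a := 5) (b := 5) rfl (by decide),
    jt_neg_even h0 hu (a := 2) (b := 8) rfl (by decide),
    jt_neg_even h0 hu (a := 4) (b := 6) rfl (by decide)]
  field_simp

theorem comp_three : ∃ α : ℕ → ℝ, (∀ n, 0 < α n) ∧
    ∀ y : ℂ, y ≠ 0 → ‖y‖ < 1 → HasSum (fun n => (α n : ℂ) * (-y) ^ n)
      (jt y 1 ^ 2 * jt y 3 * jt y 5 / (jt y 2 ^ 3 * jt y 4)) := by
  refine comp_pos (g := fun y => jt y 1 ^ 2 * jt y 3 * jt y 5 / (jt y 2 ^ 3 * jt y 4))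
    ((((goodO 1 (by simp)).mul ((goodO 9 (by simp)).pow 2)).mul
      (((goodO 3 (by simp)).mul (goodO 7 (by simp))).mul ((goodO 5 (by simp)).pow 2))).mul
      ((((goodV 2 (by simp)).pow 2).mul ((goodV 8 (by simp)).pow 3)).mul
      ((goodV 4 (by simp)).mul (goodV 6 (by simp))))) fun u h0 hu h10 => ?_
  rw [jt_neg_odd h0 hu (a := 1) (b := 9) rfl (by decide),
    jt_neg_odd h0 hu (a := 3) (b := 7) rfl (by decide),
    jt_neg_odd h0 hu (a := 5) (b := 5) rfl (by decide),
    jt_neg_even h0 hu (a := 2) (b := 8) rfl (by decide),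
    jt_neg_even h0 hu (a := 4) (b := 6) rfl (by decide)]
  field_simp

theorem comp_four : ∃ α : ℕ → ℝ, (∀ n, 0 < α n) ∧
    ∀ y : ℂ, y ≠ 0 → ‖y‖ < 1 → HasSum (fun n => (α n : ℂ) * (-y) ^ n)
      (jt y 1 * jt y 3 ^ 2 * jt y 5 / (jt y 2 * jt y 4 ^ 3)) := by
  refine comp_pos (g := fun y => jt y 1 * jt y 3 ^ 2 * jt y 5 / (jt y 2 * jt y 4 ^ 3))
    ((((goodO 9 (by simp)).mul (((goodO 3 (by simp)).mul (goodO 7 (by simp))).pow 2)).mul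
      (((goodO 5 (by simp)).pow 2).mul (goodV 8 (by simp)))).mul
      (((goodV 4 (by simp)).mul (goodV 6 (by simp))).pow 3)) fun u h0 hu h10 => ?_
  rw [jt_neg_odd h0 hu (a := 1) (b := 9) rfl (by decide),
    jt_neg_odd h0 hu (a := 3) (b := 7) rfl (by decide),
    jt_neg_odd h0 hu (a := 5) (b := 5) rfl (by decide),
    jt_neg_even h0 hu (a := 2) (b := 8) rfl (by decide),
    jt_neg_even h0 hu (a := 4) (b := 6) rfl (by decide)]
  field_simp

/-! ### The coefficients -/
theorem qp_five {q : ℂ} (hq : ‖q‖ < 1) (a : ℕ) :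
    qp (q ^ a) (q ^ 5) = ee q a * ee q (a + 5) := by
  rw [qp_dissect (norm_pow_lt hq (by norm_num)) _ 2, Fin.prod_univ_two, ee, ee]
  congr 1
  · congr 1
    · simp
    · ring
  · congr 1
    · rw [Fin.val_one]; ring
    · ring

theorem target_eq {q : ℂ} (h0 : q ≠ 0) (hq : ‖q‖ < 1) :
    1 / (RR q * RR (q ^ 2) ^ 2) = jt q 3 * jt q 4 / (jt q 1 * jt q 2) := by
  have h1 := qp_five hq 1
  rw [pow_one] at h1
  have h2 (a : ℕ) : qp ((q ^ 2) ^ a) ((q ^ 2) ^ 5) = ee q (2 * a) := by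
    rw [ee, ← pow_mul, ← pow_mul]
  have h3 : qp (q ^ 2) ((q ^ 2) ^ 5) = ee q 2 := by simpa using h2 1
  rw [RR, RR, h1, qp_five hq, qp_five hq, qp_five hq, h2, h2, h2, h3,
    jt_eq h0 hq (a := 1) (b := 9) rfl, jt_eq h0 hq (a := 2) (b := 8) rfl,
    jt_eq h0 hq (a := 3) (b := 7) rfl, jt_eq h0 hq (a := 4) (b := 6) rfl]
  norm_num only
  have n (i : ℕ) (hi : i ≠ 0) := ee_ne_zero hq hi
  have n1 := n 1 (by simp)
  have n2 := n 2 (by simp)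
  have n3 := n 3 (by simp)
  have n4 := n 4 (by simp)
  have n6 := n 6 (by simp)
  have n7 := n 7 (by simp)
  have n8 := n 8 (by simp)
  have n9 := n 9 (by simp)
  have n10 := n 10 (by simp)
  field_simp

/-- The expansion of the quotient, with the signs made explicit: `n = 5k + r` carries the sign
`(-1)^k` coming from `y ↦ -y`, and `α 0 1` is the coefficient of `q^5`. -/
theorem signed_coeff : ∃ α : ℕ → ℕ → ℝ,
    (α 0 1 = 0 ∧ ∀ r n, r ≠ 0 ∨ n ≠ 1 → 0 < α r n) ∧
    ∀ q : ℂ, q ≠ 0 → ‖q‖ < 1 →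
      HasSum (fun m : ℕ => (-1) ^ (m / 5) * (α (m % 5) (m / 5) : ℂ) * q ^ m)
      (1 / (RR q * RR (q ^ 2) ^ 2)) := by
  obtain ⟨a0, ⟨h01, h0p⟩, h0⟩ := comp_zero
  obtain ⟨a1, h1p, h1⟩ := comp_one
  obtain ⟨a2, h2p, h2⟩ := comp_two
  obtain ⟨a3, h3p, h3⟩ := comp_three
  obtain ⟨a4, h4p, h4⟩ := comp_four
  obtain ⟨α, e0, e1, e2, e3, e4⟩ : ∃ α : ℕ → ℕ → ℝ, α 0 = a0 ∧ α 1 = a1 ∧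
      (α 2 = fun n => 2 * a2 n) ∧ α 3 = a3 ∧ ∀ r, α (r + 4) = a4 :=
    ⟨fun r => match r with
      | 0 => a0
      | 1 => a1
      | 2 => fun n => 2 * a2 n
      | 3 => a3
      | _ + 4 => a4, rfl, rfl, rfl, rfl, fun _ => rfl⟩
  refine ⟨α, ⟨by rw [e0, h01], fun r n hrn => ?_⟩, fun q hq0 hq => ?_⟩
  · match r with
    | 0 => rw [e0]; exact h0p n (by simpa using hrn)
    | 1 => rw [e1]; exact h1p n
    | 2 => rw [e2]; exact mul_pos two_pos (h2p n)
    | 3 => rw [e3]; exact h3p n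
    | r + 4 => rw [e4]; exact h4p n
  have hy0 : q ^ 5 ≠ 0 := pow_ne_zero _ hq0
  have hy : ‖q ^ 5‖ < 1 := norm_pow_lt hq (by norm_num)
  -- the progression `m ≡ r (mod 5)`
  have key (r : ℕ) (hr : r < 5) {s : ℂ} (hs : HasSum (fun n => (α r n : ℂ) * (-q ^ 5) ^ n) s) :
      HasSum (fun m : ℕ => if m % 5 = r then
        (-1) ^ (m / 5) * (α (m % 5) (m / 5) : ℂ) * q ^ m else 0) (q ^ r * s) := by
    have hinj : Function.Injective fun n : ℕ => 5 * n + r := fun a b h => by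
      simp only at h; omega
    rw [← hinj.hasSum_iff]
    · refine (hs.mul_left (q ^ r)).congr_fun fun n => ?_
      have d1 : (5 * n + r) % 5 = r := by omega
      have d2 : (5 * n + r) / 5 = n := by omega
      simp only [Function.comp, d1, d2, if_true]
      rw [neg_pow, pow_add, pow_mul]
      ring
    · intro m hm
      rw [if_neg]
      exact fun h => hm ⟨m / 5, by simp only; omega⟩
  have k0 := key 0 (by norm_num) (by rw [e0]; exact h0 _ hy0 hy)
  have k1 := key 1 (by norm_num) (by rw [e1]; exact h1 _ hy0 hy)
  have k2 := key 2 (by norm_num) (s := 2 * _) (by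
    rw [e2]
    refine ((h2 _ hy0 hy).mul_left 2).congr_fun fun n => ?_
    push_cast
    ring)
  have k3 := key 3 (by norm_num) (by rw [e3]; exact h3 _ hy0 hy)
  have k4 := key 4 (by norm_num) (by rw [e4 0]; exact h4 _ hy0 hy)
  have hsum := (((k0.add k1).add k2).add k3).add k4
  rw [target_eq hq0 hq, dissection hq0 hq rfl]
  rw [pow_zero, one_mul, pow_one] at hsum
  refine hsum.congr_fun fun m => ?_
  have : m % 5 < 5 := Nat.mod_lt _ (by norm_num)
  generalize m % 5 = r at *
  interval_cases r <;> simp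

/-- Uniqueness of power series coefficients, from the values on a punctured disc. -/
theorem coeff_zero {d : ℕ → ℂ}
    (h : ∀ q : ℂ, q ≠ 0 → ‖q‖ < 1 → HasSum (fun n => d n * q ^ n) 0) : d = 0 := by
  have hp : HasFPowerSeriesAt (fun z => ∑' n, d n * z ^ n)
      (FormalMultilinearSeries.ofScalars ℂ d) 0 := by
    rw [hasFPowerSeriesAt_iff]
    filter_upwards [Metric.ball_mem_nhds (0 : ℂ) one_pos] with z hz
    rw [mem_ball_zero_iff] at hz
    simp only [FormalMultilinearSeries.coeff_ofScalars, zero_add, smul_eq_mul, mul_comm]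
    by_cases h0 : z = 0
    · subst h0
      exact (summable_of_ne_finset_zero (s := {0}) fun n hn => by
        simp [show n ≠ 0 by simpa using hn]).hasSum
    · exact (h z h0 hz).summable.hasSum
  have hz : ∀ᶠ z in 𝓝[≠] (0 : ℂ), ∑' n, d n * z ^ n = 0 := by
    filter_upwards [self_mem_nhdsWithin,
      mem_nhdsWithin_of_mem_nhds (Metric.ball_mem_nhds (0 : ℂ) one_pos)] with z hz hz1
    exact (h z hz (mem_ball_zero_iff.mp hz1)).tsum_eq
  have hev := hp.analyticAt.eventually_eq_zero_or_eventually_ne_zero.resolve_right fun hne => by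
    obtain ⟨z, h1, h2⟩ := (hz.and hne).exists
    exact h2 h1
  exact (FormalMultilinearSeries.ofScalars_series_eq_zero (E := ℂ) (c := d)).mp
    (hp.eq_zero_of_eventually hev)

theorem coeff_eq {β : ℕ → ℤ} (h : ∀ q : ℂ, ‖q‖ < 1 →
      1 / (RR q * RR (q ^ 2) ^ 2) = ∑' n : ℕ, (β n : ℂ) * q ^ n) :
    ∃ α : ℕ → ℕ → ℝ, (α 0 1 = 0 ∧ ∀ r n, r ≠ 0 ∨ n ≠ 1 → 0 < α r n) ∧
      ∀ m, (β m : ℝ) = (-1) ^ (m / 5) * α (m % 5) (m / 5) := by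
  obtain ⟨α, hα, hs⟩ := signed_coeff
  refine ⟨α, hα, fun m => ?_⟩
  have hd := coeff_zero (d := fun m => (β m : ℂ) - (-1) ^ (m / 5) * (α (m % 5) (m / 5) : ℂ))
    fun q h0 hq => by
      have hb : Summable fun n : ℕ => (β n : ℂ) * q ^ n := by
        -- a divergent series would have sum 0, but the quotient does not vanish
        by_contra hns
        have := h q hq
        rw [tsum_eq_zero_of_not_summable hns, target_eq h0 hq] at this
        have j (a : ℕ) (h1 : a ≠ 0) (h2 : a < 10) := jt_ne_zero h0 hq h1 h2
        exact div_ne_zero (mul_ne_zero (j 3 (by simp) (by simp)) (j 4 (by simp) (by simp)))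
          (mul_ne_zero (j 1 (by simp) (by simp)) (j 2 (by simp) (by simp))) this
      have h1 := hb.hasSum
      rw [← h q hq] at h1
      have := h1.sub (hs q h0 hq)
      rw [sub_self] at this
      exact this.congr_fun fun n => by ring
  have := congrFun hd m
  simp only [Pi.zero_apply, sub_eq_zero] at this
  exact_mod_cast this

end KSign

theorem stmt18 (β : ℕ → ℤ)
    (h : ∀ q : ℂ, ‖q‖ < 1 →
      1 / (RR q * RR (q ^ 2) ^ 2) = ∑' n : ℕ, (β n : ℂ) * q ^ n) :
    β 5 = 0 ∧ ∀ n : ℕ,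
      ((n % 10 = 0 ∨ n % 10 = 1 ∨ n % 10 = 2 ∨ n % 10 = 3 ∨ n % 10 = 4) → 0 < β n) ∧
      (n ≠ 5 →
        (n % 10 = 5 ∨ n % 10 = 6 ∨ n % 10 = 7 ∨ n % 10 = 8 ∨ n % 10 = 9) → β n < 0) := by
  obtain ⟨α, ⟨h01, hpos⟩, hβ⟩ := KSign.coeff_eq h
  refine ⟨?_, fun n => ⟨fun hn => ?_, fun h5 hn => ?_⟩⟩
  · have := hβ 5
    norm_num [h01] at this
    exact this
  · have he : Even (n / 5) := by rw [Nat.even_iff]; omega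
    have hp := hpos (n % 5) (n / 5) (by omega)
    have := hβ n
    rw [he.neg_one_pow, one_mul] at this
    rw [← this] at hp
    exact_mod_cast hp
  · have ho : Odd (n / 5) := by rw [Nat.odd_iff]; omega
    have hp := hpos (n % 5) (n / 5) (by omega)
    have := hβ n
    rw [ho.neg_one_pow, neg_one_mul] at this
    rw [← neg_eq_iff_eq_neg.mpr this, neg_pos] at hp
    exact_mod_cast hp
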